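/- arXiv:2407.02332 — 6 statements merged into one kernel-verified Lean document; each statement's English description precedes it below -/
import Mathlib

section
/- Let N ≥ 1 and let u₀ ∈ C⁰(ℝ^N) ∩ L¹(ℝ^N) satisfy u₀ ≥ 0 and ∫_{ℝ^N} u₀ dL^N = 1, and let U(t,·) = H_t u₀ be its heat flow. Then for every t > 0 one has U(t,x) > 0 for all x, and for all x, v ∈ ℝ^N, Hess(log U(t,·))(x)(v,v) ≥ -|v|²/(2t). -/
open MeasureTheory Filter Metric
open scoped ENNReal NNReal Topology

noncomputable section

/-- Euclidean space `ℝ^N`. -/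
abbrev E (N : ℕ) : Type := EuclideanSpace ℝ (Fin N)

/-- The Euclidean heat kernel `H(t,x,y) = (4πt)^{-N/2} exp(-|x-y|²/(4t))`. -/
def heatKernel (N : ℕ) (t : ℝ) (x y : E N) : ℝ :=
  (4 * Real.pi * t) ^ (-(N : ℝ) / 2) * Real.exp (-‖x - y‖ ^ 2 / (4 * t))

/-- The heat flow `(H_t u₀)(x) = ∫ u₀(y) H(t,x,y) dy`, with `H_0 u₀ = u₀`. -/
def heatFlow (N : ℕ) (u₀ : E N → ℝ) (t : ℝ) (x : E N) : ℝ :=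
  if t = 0 then u₀ x else ∫ y, u₀ y * heatKernel N t x y

/-- `VT N T u` means `u ∈ 𝒱𝒯₁⁺(T)`: `u` is `C²`, in `L¹`, positive, of unit mass, and
`2T·Hess(log u)(x)(v,v) + |v|² ≥ 0` for all `x, v`. -/
def VT (N : ℕ) (T : ℝ) (u : E N → ℝ) : Prop :=
  ContDiff ℝ 2 u ∧ Integrable u volume ∧ (∀ x, 0 < u x) ∧ (∫ x, u x) = 1 ∧
    ∀ x v : E N,
      0 ≤ 2 * T * iteratedFDeriv ℝ 2 (fun y => Real.log (u y)) x ![v, v] + ‖v‖ ^ 2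

/-- The Colding–Minicozzi entropy `λ_CM^n[μ]`. -/
def lamCM {N : ℕ} (n : ℕ) (μ : Measure (E N)) : ℝ≥0∞ :=
  ⨆ (ρ : ℝ) (_ : 0 < ρ) (x₀ : E N),
    ENNReal.ofReal ((4 * Real.pi * ρ) ^ (-(n : ℝ) / 2)) *
      ∫⁻ x, ENNReal.ofReal (Real.exp (-‖x - x₀‖ ^ 2 / (4 * ρ))) ∂μ

/-- The virtual entropy `λ_V^n[μ]`. -/
def lamV {N : ℕ} (n : ℕ) (μ : Measure (E N)) : ℝ≥0∞ :=
  ⨆ (T : ℝ) (_ : 0 < T) (u : E N → ℝ) (_ : VT N T u),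
    ENNReal.ofReal ((4 * Real.pi * T) ^ (((N : ℝ) - n) / 2)) *
      ∫⁻ x, ENNReal.ofReal (u x) ∂μ

/-- The Li–Yau weight `W^M_ρ`, expressed as a function of the squared norm `r2 = |x|²`:
`W^M_ρ(x) = ρ^M (1 + ρ²|x|²/4)^{-M}`. -/
def W (M : ℕ) (ρ r2 : ℝ) : ℝ := ρ ^ M / (1 + ρ ^ 2 * r2 / 4) ^ M

/-- The Li–Yau conformal volume `λ_LY^k[μ]`. -/
def lamLY {N : ℕ} (k : ℕ) (μ : Measure (E N)) : ℝ≥0∞ :=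
  ⨆ (ρ : ℝ) (_ : 0 < ρ) (x₀ : E N), ∫⁻ x, ENNReal.ofReal (W k ρ (‖x - x₀‖ ^ 2)) ∂μ

/-- The `k`-dimensional volume `|𝕊^k|` of the unit `k`-sphere, as the `k`-dimensional
Hausdorff measure of the unit sphere in `ℝ^{k+1}`. -/
def sphereVol (k : ℕ) : ℝ :=
  (μH[(k : ℝ)] (Metric.sphere (0 : EuclideanSpace ℝ (Fin (k + 1))) 1)).toReal

/-- The normalized Li–Yau conformal volume `λ̄_LY^k[μ] = |𝕊^k|⁻¹ λ_LY^k[μ]`. -/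
def lamLYbar {N : ℕ} (k : ℕ) (μ : Measure (E N)) : ℝ≥0∞ :=
  ENNReal.ofReal ((sphereVol k)⁻¹) * lamLY k μ

/-- The Li–Yau conformal volume `λ_LY^k[μ ⊗ L^{2m}]` of the product of `μ` with Lebesgue
measure on `ℝ^{2m}` (the squared Euclidean norm on `ℝ^{N+2m}` of `(y,z)-(y₀,z₀)` is
`|y-y₀|² + |z-z₀|²`). -/
def lamLYProd {N : ℕ} (k : ℕ) (μ : Measure (E N)) (m : ℕ) : ℝ≥0∞ :=
  ⨆ (ρ : ℝ) (_ : 0 < ρ) (y₀ : E N) (z₀ : E (2 * m)),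
    ∫⁻ p : E N × E (2 * m),
      ENNReal.ofReal (W k ρ (‖p.1 - y₀‖ ^ 2 + ‖p.2 - z₀‖ ^ 2)) ∂(μ.prod volume)

/-- The normalized Li–Yau conformal volume `λ̄_LY^k[μ ⊗ L^{2m}]`. -/
def lamLYbarProd {N : ℕ} (k : ℕ) (μ : Measure (E N)) (m : ℕ) : ℝ≥0∞ :=
  ENNReal.ofReal ((sphereVol k)⁻¹) * lamLYProd k μ m

/-- The constant `C_{M,m} = (4π)^m (M+m-1)!/(M+2m-1)!`. -/
def Cconst (M m : ℕ) : ℝ :=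
  (4 * Real.pi) ^ m * (Nat.factorial (M + m - 1) : ℝ) / (Nat.factorial (M + 2 * m - 1) : ℝ)

/-- The modified weight `Ŵ^n_{M,ρ}(x) = (4πρ)^{-n/2} (1 + |x|²/(4Mρ))^{-M}`, as a function
of the squared norm `r2 = |x|²`. -/
def What (n M : ℕ) (ρ r2 : ℝ) : ℝ :=
  (4 * Real.pi * ρ) ^ (-(n : ℝ) / 2) / (1 + r2 / (4 * (M : ℝ) * ρ)) ^ M

/-- The constant `Ĉ_{n,m} = (4π/(n+m))^{n/2} |𝕊^{n+2m}|⁻¹ C_{n,m}`. -/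
def Chat (n m : ℕ) : ℝ :=
  (4 * Real.pi / ((n : ℝ) + m)) ^ ((n : ℝ) / 2) * (sphereVol (n + 2 * m))⁻¹ * Cconst n m

/-!
Write the heat flow as `G(x) = ∫ exp(-|x - y|²/(4t)) dμ(y)`, the normalizing constant being absorbed
into the initial measure `μ`. Completing the square along the line `s ↦ x + s v` turns `G` into a
Laplace transform: `log G(x + s v) + s²|v|²/(4t)` is, up to a constant, the cumulant generating
function of `y ↦ ⟪v, y - x⟫/(2t)` under the probability measure proportional to
`exp(-|x - y|²/(4t)) dμ(y)`. Its second derivative at `s = 0` is a variance, so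
`Hess(log G)(x)(v,v) = Var - |v|²/(2t)`, and variances are nonnegative. The derivatives of `G` may
be taken under the integral because all derivatives of the Gaussian are bounded.
-/

open Real ProbabilityTheory
open scoped ContDiff

lemma integral_curryLeft {α 𝕜 W : Type*} {n : ℕ} {V : Fin (n + 1) → Type*} [MeasurableSpace α]
    [RCLike 𝕜] [∀ i, NormedAddCommGroup (V i)] [∀ i, NormedSpace 𝕜 (V i)] [NormedAddCommGroup W]
    [NormedSpace 𝕜 W] [NormedSpace ℝ W] [SMulCommClass 𝕜 ℝ W] (μ : Measure α)
    (f : α → ContinuousMultilinearMap 𝕜 V W) :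
    ∫ a, (f a).curryLeft ∂μ = (∫ a, f a ∂μ).curryLeft :=
  ContinuousLinearEquiv.integral_comp_comm (𝕜 := 𝕜)
    (F := V 0 →L[𝕜] ContinuousMultilinearMap 𝕜 (fun i : Fin n => V i.succ) W)
    (continuousMultilinearCurryLeftEquiv 𝕜 V W).toContinuousLinearEquiv f

section ConvolutionWithFiniteMeasure

variable {V W : Type*} [NormedAddCommGroup V] [MeasurableSpace V] [OpensMeasurableSpace V]
  [SecondCountableTopology V] [NormedAddCommGroup W] {μ : Measure V} [IsFiniteMeasure μ]

lemma integrable_comp_sub_of_bounded {g : V → W} (hg : Continuous g) {C : ℝ}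
    (hC : ∀ z, ‖g z‖ ≤ C) (x : V) : Integrable (fun y => g (x - y)) μ :=
  .of_bound (by fun_prop) C (ae_of_all _ fun y => hC (x - y))

variable [NormedSpace ℝ W]

lemma continuous_integral_comp_sub {g : V → W} (hg : Continuous g) {C : ℝ}
    (hC : ∀ z, ‖g z‖ ≤ C) : Continuous fun x => ∫ y, g (x - y) ∂μ :=
  continuous_of_dominated (fun x => by fun_prop) (fun x => ae_of_all _ fun y => hC (x - y))
    (integrable_const C) (ae_of_all _ fun y => by fun_prop)

variable [NormedSpace ℝ V]

lemma hasFDerivAt_integral_comp_sub {g : V → W} {g' : V → V →L[ℝ] W}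
    (hg : ∀ z, HasFDerivAt g (g' z) z) (hg' : Continuous g') {C C' : ℝ}
    (hC : ∀ z, ‖g z‖ ≤ C) (hC' : ∀ z, ‖g' z‖ ≤ C') (x : V) :
    HasFDerivAt (fun x => ∫ y, g (x - y) ∂μ) (∫ y, g' (x - y) ∂μ) x := by
  have hcont : Continuous g := continuous_iff_continuousAt.2 fun z => (hg z).continuousAt
  have hint := integrable_comp_sub_of_bounded (μ := μ) hcont hC
  exact hasFDerivAt_integral_of_dominated_of_fderiv_le (F' := fun x y => g' (x - y)) univ_mem
    (.of_forall fun z => (hint z).aestronglyMeasurable) (hint x) (by fun_prop)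
    (ae_of_all _ fun y z _ => hC' (z - y)) (integrable_const C')
    (ae_of_all _ fun y z _ => (hasFDerivAt_comp_sub y).2 (hg (z - y)))

theorem contDiff_integral_comp_sub {n : ℕ∞} {g : V → W} (hg : ContDiff ℝ n g)
    (hb : ∀ k : ℕ, k ≤ n → ∃ C, ∀ z, ‖iteratedFDeriv ℝ k g z‖ ≤ C) :
    ContDiff ℝ n fun x => ∫ y, g (x - y) ∂μ := by
  have hcont (k : ℕ) (hk : k ≤ n) : Continuous (iteratedFDeriv ℝ k g) :=
    hg.continuous_iteratedFDeriv (mod_cast hk)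
  refine HasFTaylorSeriesUpTo.contDiff (f' := fun x k => ∫ y, iteratedFDeriv ℝ k g (x - y) ∂μ)
    ⟨fun x => ?_, fun k hk x => ?_, fun k hk => ?_⟩
  · exact ((continuousMultilinearCurryFin0 ℝ V W).toContinuousLinearEquiv.integral_comp_comm _).symm
  · have hk1 : ((k + 1 : ℕ) : ℕ∞) ≤ n := by
      exact_mod_cast Order.add_one_le_of_lt (mod_cast hk : (k : ℕ∞) < n)
    obtain ⟨C, hC⟩ := hb k (le_trans (mod_cast k.le_succ) hk1)
    obtain ⟨C', hC'⟩ := hb (k + 1) hk1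
    rw [← integral_curryLeft]
    exact hasFDerivAt_integral_comp_sub (hg.ftaylorSeries.fderiv k hk)
      ((continuousMultilinearCurryLeftEquiv ℝ (fun _ : Fin (k + 1) => V) W).continuous.comp
        (hcont (k + 1) hk1))
      hC (fun z => (ContinuousMultilinearMap.curryLeft_norm _).trans_le (hC' z)) x
  · obtain ⟨C, hC⟩ := hb k (mod_cast hk)
    exact continuous_integral_comp_sub (hcont k (mod_cast hk)) hC

end ConvolutionWithFiniteMeasure

section IteratedDerivatives

variable {V W : Type*} [NormedAddCommGroup V] [NormedSpace ℝ V] [NormedAddCommGroup W]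
  [NormedSpace ℝ W]

lemma iteratedDeriv_comp_add_smul {n : ℕ} {f : V → W} (hf : ContDiff ℝ n f) (x v : V) (s : ℝ) :
    iteratedDeriv n (fun r : ℝ => f (x + r • v)) s =
      iteratedFDeriv ℝ n f (x + s • v) fun _ => v := by
  have hshift : ContDiff ℝ n fun z => f (x + z) := by fun_prop
  have h := (ContinuousLinearMap.toSpanSingleton ℝ v).iteratedFDeriv_comp_right hshift s le_rfl
  rw [iteratedFDeriv_comp_add_left] at h
  simpa [iteratedDeriv, Function.comp_def] using congrArg (fun L => L fun _ => (1 : ℝ)) h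

lemma exists_norm_iteratedFDeriv_exp_le {f : V → ℝ} (hf : f.HasTemperateGrowth) (n : ℕ) :
    ∃ (k : ℕ) (C : ℝ), 0 ≤ C ∧
      ∀ z, ‖iteratedFDeriv ℝ n (fun z => exp (f z)) z‖ ≤ C * ((1 + ‖z‖) ^ k * exp (f z)) := by
  obtain ⟨k, C, hC, hfC⟩ := hf.norm_iteratedFDeriv_le_uniform n
  refine ⟨k * n, n.factorial * (1 + C) ^ n, by positivity, fun z => ?_⟩
  set D : ℝ := (1 + C) * (1 + ‖z‖) ^ k with hD
  have hD_one : 1 ≤ D :=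
    one_le_mul_of_one_le_of_one_le (by linarith) (one_le_pow₀ (by linarith [norm_nonneg z]))
  have hexp (i : ℕ) : ‖iteratedFDeriv ℝ i exp (f z)‖ ≤ exp (f z) := by
    simp [norm_iteratedFDeriv_eq_norm_iteratedDeriv, iteratedDeriv_eq_iterate]
  have hfD (i : ℕ) (hi : 1 ≤ i) (hin : i ≤ n) : ‖iteratedFDeriv ℝ i f z‖ ≤ D ^ i :=
    calc ‖iteratedFDeriv ℝ i f z‖ ≤ C * (1 + ‖z‖) ^ k := hfC i hin z
      _ ≤ D := by rw [hD]; gcongr; linarith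
      _ ≤ D ^ i := le_self_pow₀ hD_one (by omega)
  calc ‖iteratedFDeriv ℝ n (fun z => exp (f z)) z‖ ≤ n.factorial * exp (f z) * D ^ n :=
        norm_iteratedFDeriv_comp_le contDiff_exp hf.1 (mod_cast le_top) z (fun i _ => hexp i) hfD
    _ = n.factorial * (1 + C) ^ n * ((1 + ‖z‖) ^ (k * n) * exp (f z)) := by
        rw [hD, mul_pow, ← pow_mul]; ring

end IteratedDerivatives

section GaussianBounds

lemma one_add_pow_mul_exp_neg_mul_sq_le (m : ℕ) {b r : ℝ} (hb : 0 < b) (hr : 0 ≤ r) :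
    (1 + r) ^ m * exp (-(b * r ^ 2)) ≤ m.factorial * exp (1 + 1 / (4 * b)) := by
  have hpow : (1 + r) ^ m ≤ m.factorial * exp (1 + r) :=
    (div_le_iff₀' (by positivity)).1 (pow_div_factorial_le_exp (1 + r) (by positivity) m)
  have hsq : r ≤ b * r ^ 2 + 1 / (4 * b) := by
    have h : b * r ^ 2 + 1 / (4 * b) - r = (2 * b * r - 1) ^ 2 / (4 * b) := by field_simp; ring
    linarith [show 0 ≤ (2 * b * r - 1) ^ 2 / (4 * b) by positivity]
  calc (1 + r) ^ m * exp (-(b * r ^ 2))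
      ≤ m.factorial * exp (1 + r) * exp (-(b * r ^ 2)) := by gcongr
    _ = m.factorial * exp (1 + r - b * r ^ 2) := by rw [mul_assoc, ← exp_add, sub_eq_add_neg]
    _ ≤ m.factorial * exp (1 + 1 / (4 * b)) := by gcongr; linarith

variable {V : Type*} [NormedAddCommGroup V] [InnerProductSpace ℝ V]

lemma hasTemperateGrowth_neg_norm_sq_div (a : ℝ) :
    (fun z : V => -‖z‖ ^ 2 / a).HasTemperateGrowth := by
  simp only [div_eq_mul_inv]
  fun_prop

lemma exists_norm_iteratedFDeriv_gaussian_le {a : ℝ} (ha : 0 < a) (n : ℕ) :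
    ∃ C, ∀ z : V, ‖iteratedFDeriv ℝ n (fun z : V => exp (-‖z‖ ^ 2 / a)) z‖ ≤ C := by
  obtain ⟨k, C, hC, hbound⟩ :=
    exists_norm_iteratedFDeriv_exp_le (hasTemperateGrowth_neg_norm_sq_div (V := V) a) n
  refine ⟨C * (k.factorial * exp (1 + 1 / (4 * a⁻¹))), fun z => (hbound z).trans ?_⟩
  rw [neg_div, div_eq_inv_mul]
  exact mul_le_mul_of_nonneg_left
    (one_add_pow_mul_exp_neg_mul_sq_le k (inv_pos.2 ha) (norm_nonneg z)) hC

end GaussianBounds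

section WeierstrassTransform

variable {V : Type*} [NormedAddCommGroup V] [InnerProductSpace ℝ V]

/-- The directional derivative at `x`, in the direction `v`, of `-|x - y|²/(4t)`: the score of the
Gaussian family with location parameter `x` and variance `2t`. -/
def gaussianScore (t : ℝ) (x v y : V) : ℝ := inner ℝ v (y - x) / (2 * t)

lemma neg_norm_sq_div_add_mul_gaussianScore {t : ℝ} (ht : 0 < t) (x v y : V) (s : ℝ) :
    -‖x - y‖ ^ 2 / (4 * t) + s * gaussianScore t x v y =
      -‖x + s • v - y‖ ^ 2 / (4 * t) + s ^ 2 * (‖v‖ ^ 2 / (4 * t)) := by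
  have h : ‖x + s • v - y‖ ^ 2 = ‖x - y‖ ^ 2 - 2 * s * inner ℝ v (y - x) + s ^ 2 * ‖v‖ ^ 2 := by
    rw [show x + s • v - y = s • v - (y - x) by abel, norm_sub_sq_real, norm_smul, mul_pow,
      norm_eq_abs, sq_abs, real_inner_smul_left, norm_sub_rev x y]
    ring
  rw [h, gaussianScore]
  field_simp
  ring

variable [MeasurableSpace V]

/-- The Weierstrass transform of the measure `μ`, that is, its heat flow at time `t`. The factor
`(4πt)^{-N/2}` is omitted, so that the dimension of `V` may be infinite. -/
def weierstrassTransform (μ : Measure V) (t : ℝ) (x : V) : ℝ :=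
  ∫ y, exp (-‖x - y‖ ^ 2 / (4 * t)) ∂μ

/-- The probability measure proportional to `exp(-|x - y|²/(4t)) dμ(y)`. When `μ` is a probability
measure it is the law of the starting point of a Brownian motion with initial law `μ`, conditioned
to be at `x` at time `2t`. -/
def heatPosterior (μ : Measure V) (t : ℝ) (x : V) : Measure V :=
  μ.tilted fun y => -‖x - y‖ ^ 2 / (4 * t)

variable {μ : Measure V} {t : ℝ}

lemma mgf_gaussianScore_heatPosterior (ht : 0 < t) (x v : V) (s : ℝ) :
    mgf (gaussianScore t x v) (heatPosterior μ t x) s =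
      weierstrassTransform μ t (x + s • v) * exp (s ^ 2 * (‖v‖ ^ 2 / (4 * t))) /
        weierstrassTransform μ t x := by
  rw [mgf, heatPosterior, integral_exp_tilted]
  simp_rw [Pi.add_apply, neg_norm_sq_div_add_mul_gaussianScore ht, exp_add, integral_mul_const]
  rfl

variable [OpensMeasurableSpace V] [SecondCountableTopology V] [IsFiniteMeasure μ]

lemma integrable_gaussian_sub (ht : 0 < t) (x : V) :
    Integrable (fun y => exp (-‖x - y‖ ^ 2 / (4 * t))) μ := by
  obtain ⟨C, hC⟩ := exists_norm_iteratedFDeriv_gaussian_le (V := V) (a := 4 * t) (by positivity) 0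
  exact integrable_comp_sub_of_bounded (g := fun z : V => exp (-‖z‖ ^ 2 / (4 * t)))
    (by fun_prop) (by simpa using hC) x

lemma contDiff_weierstrassTransform (ht : 0 < t) : ContDiff ℝ ∞ (weierstrassTransform μ t) :=
  contDiff_integral_comp_sub (g := fun z : V => exp (-‖z‖ ^ 2 / (4 * t)))
    (hasTemperateGrowth_neg_norm_sq_div (4 * t)).1.exp
    fun k _ => exists_norm_iteratedFDeriv_gaussian_le (by positivity) k

lemma integrableExpSet_gaussianScore_heatPosterior (ht : 0 < t) (x v : V) :
    integrableExpSet (gaussianScore t x v) (heatPosterior μ t x) = Set.univ := by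
  refine Set.eq_univ_of_forall fun s => ?_
  change Integrable _ (μ.tilted _)
  rw [integrable_tilted_iff (integrable_gaussian_sub ht x)]
  simp_rw [smul_eq_mul, ← exp_add, neg_norm_sq_div_add_mul_gaussianScore ht, exp_add]
  exact (integrable_gaussian_sub ht _).mul_const _

variable [NeZero μ]

lemma isProbabilityMeasure_heatPosterior (ht : 0 < t) (x : V) :
    IsProbabilityMeasure (heatPosterior μ t x) :=
  isProbabilityMeasure_tilted (integrable_gaussian_sub ht x)

lemma weierstrassTransform_pos (ht : 0 < t) (x : V) : 0 < weierstrassTransform μ t x :=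
  integral_exp_pos (integrable_gaussian_sub ht x)

lemma log_weierstrassTransform_add_smul (ht : 0 < t) (x v : V) (s : ℝ) :
    log (weierstrassTransform μ t (x + s • v)) =
      log (weierstrassTransform μ t x) +
        (cgf (gaussianScore t x v) (heatPosterior μ t x) s - ‖v‖ ^ 2 / (4 * t) * s ^ 2) := by
  have hx := weierstrassTransform_pos (μ := μ) ht x
  have hs := weierstrassTransform_pos (μ := μ) ht (x + s • v)
  rw [cgf, mgf_gaussianScore_heatPosterior ht, log_div (by positivity) hx.ne',
    log_mul hs.ne' (exp_ne_zero _), log_exp]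
  ring

theorem iteratedFDeriv_two_log_weierstrassTransform (ht : 0 < t) (x v : V) :
    iteratedFDeriv ℝ 2 (fun y => log (weierstrassTransform μ t y)) x ![v, v] =
      Var[gaussianScore t x v; heatPosterior μ t x] - ‖v‖ ^ 2 / (2 * t) := by
  have hprob := isProbabilityMeasure_heatPosterior (μ := μ) ht x
  have hzero :
      (0 : ℝ) ∈ interior (integrableExpSet (gaussianScore t x v) (heatPosterior μ t x)) := by
    simp [integrableExpSet_gaussianScore_heatPosterior ht]
  have hvar : iteratedDeriv 2 (cgf (gaussianScore t x v) (heatPosterior μ t x)) 0 =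
      Var[gaussianScore t x v; heatPosterior μ t x] := by
    simp [← variance_tilted_mul hzero]
  have hsmooth : ContDiff ℝ 2 fun y => log (weierstrassTransform μ t y) :=
    (contDiff_infty.1 (contDiff_weierstrassTransform ht) 2).log
      fun y => (weierstrassTransform_pos ht y).ne'
  have hdiag : ![v, v] = fun _ => v := by ext i; fin_cases i <;> rfl
  calc iteratedFDeriv ℝ 2 (fun y => log (weierstrassTransform μ t y)) x ![v, v]
      = iteratedDeriv 2 (fun s : ℝ => log (weierstrassTransform μ t (x + s • v))) 0 := by
        rw [hdiag, iteratedDeriv_comp_add_smul hsmooth, zero_smul, add_zero]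
    _ = iteratedDeriv 2 (cgf (gaussianScore t x v) (heatPosterior μ t x)) 0 -
          iteratedDeriv 2 (fun s : ℝ => ‖v‖ ^ 2 / (4 * t) * s ^ 2) 0 := by
        simp_rw [log_weierstrassTransform_add_smul ht]
        rw [iteratedDeriv_const_add two_pos,
          iteratedDeriv_fun_sub (analyticAt_cgf hzero).contDiffAt (by fun_prop)]
    _ = Var[gaussianScore t x v; heatPosterior μ t x] - ‖v‖ ^ 2 / (2 * t) := by
        rw [hvar, iteratedDeriv_const_mul_field, iteratedDeriv_fun_pow_zero]
        norm_num
        ring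

theorem statement_0_general (ht : 0 < t) :
    (∀ x, 0 < weierstrassTransform μ t x) ∧ ContDiff ℝ ∞ (weierstrassTransform μ t) ∧
      ∀ x v : V, -‖v‖ ^ 2 / (2 * t) ≤
        iteratedFDeriv ℝ 2 (fun y => log (weierstrassTransform μ t y)) x ![v, v] := by
  refine ⟨weierstrassTransform_pos ht, contDiff_weierstrassTransform ht, fun x v => ?_⟩
  rw [iteratedFDeriv_two_log_weierstrassTransform ht, neg_div, neg_le_sub_iff_le_add]
  exact le_add_of_nonneg_left (variance_nonneg _ _)

end WeierstrassTransform

lemma exists_heatFlow_eq_weierstrassTransform {N : ℕ} {u₀ : E N → ℝ} (hint : Integrable u₀)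
    (hnonneg : 0 ≤ᵐ[volume] u₀) (hmass : 0 < ∫ x, u₀ x) {t : ℝ} (ht : 0 < t) :
    ∃ μ : Measure (E N), IsFiniteMeasure μ ∧ NeZero μ ∧
      heatFlow N u₀ t = weierstrassTransform μ t := by
  set c : ℝ := (4 * π * t) ^ (-(N : ℝ) / 2)
  have hc : 0 < c := by positivity
  have hcint : Integrable fun y => c * u₀ y := hint.const_mul c
  refine ⟨volume.withDensity fun y => ENNReal.ofReal (c * u₀ y),
    isFiniteMeasure_withDensity_ofReal hcint.2, ⟨fun hzero => ?_⟩, funext fun x => ?_⟩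
  · rw [withDensity_eq_zero_iff hcint.aemeasurable.ennreal_ofReal] at hzero
    refine hmass.not_ge (integral_nonpos_of_ae ?_)
    filter_upwards [hzero] with y hy
    exact nonpos_of_mul_nonpos_right (ENNReal.ofReal_eq_zero.1 hy) hc
  · rw [heatFlow, if_neg ht.ne', weierstrassTransform,
      integral_withDensity_eq_integral_toReal_smul₀ hcint.aemeasurable.ennreal_ofReal
        (ae_of_all _ fun y => ENNReal.ofReal_lt_top)]
    refine integral_congr_ae ?_
    filter_upwards [hnonneg] with y hy
    rw [ENNReal.toReal_ofReal (mul_nonneg hc.le hy), smul_eq_mul, heatKernel]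
    ring

/-- positivity and the matrix Harnack inequality
`Hess(log U(t,·))(x)(v,v) ≥ -|v|²/(2t)` for the heat flow of nonnegative, continuous,
integrable initial data of unit mass. -/
theorem statement_0 (N : ℕ) (hN : 1 ≤ N) (u₀ : E N → ℝ)
    (hcont : Continuous u₀) (hint : Integrable u₀ volume)
    (hnonneg : ∀ x, 0 ≤ u₀ x) (hmass : (∫ x, u₀ x) = 1)
    (t : ℝ) (ht : 0 < t) :
    (∀ x, 0 < heatFlow N u₀ t x) ∧
      ∀ x v : E N,
        -‖v‖ ^ 2 / (2 * t) ≤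
          iteratedFDeriv ℝ 2 (fun y => Real.log (heatFlow N u₀ t y)) x ![v, v] := by
  obtain ⟨μ, _, _, hμ⟩ := exists_heatFlow_eq_weierstrassTransform hint (ae_of_all _ hnonneg)
    (hmass.symm ▸ one_pos) ht
  rw [hμ]
  exact (statement_0_general ht).imp_right And.right
end
end

section
/- Let T > 0 and u ∈ VT₁⁺(T). Then u(x) → 0 as |x| → ∞, and there exists a point z₀ ∈ ℝ^N such that for all x ∈ ℝ^N, 0 < u(z₀) exp(-|x-z₀|²/(4T)) ≤ u(x) ≤ u(z₀) ≤ (4πT)^{-N/2}. -/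
open MeasureTheory Filter Metric
open scoped ENNReal NNReal Topology

noncomputable section

/-!
Write `u = exp f`. The Hessian bound says that `f` is strongly convex with the negative modulus
`-1 / (2T)`. Convexity of the exponential then gives the midpoint inequality
`u x * exp (-‖h‖² / (4T)) ≤ (u (x + h) + u (x - h)) / 2`. Integrated in `h` over the whole space,
it bounds `u x` by a Gaussian constant; integrated over a ball, it bounds `u x` by a multiple of
the mass of `u` near `x`, which tends to `0` at infinity. Hence `u` attains its maximum at some
`z₀`, and strong convexity along the segment from a point just behind `z₀` to `x` yields the
Gaussian lower bound.
-/

section StrongConvexity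

variable {F : Type*} [NormedAddCommGroup F] [NormedSpace ℝ F] {s : Set F} {f : F → ℝ} {m : ℝ}

lemma strongConvexOn_of_hasDerivWithinAt2_ge {D : Set ℝ} (hD : Convex ℝ D) {g g' g'' : ℝ → ℝ}
    (hg : ContinuousOn g D) (hg' : ∀ t ∈ interior D, HasDerivWithinAt g (g' t) (interior D) t)
    (hg'' : ∀ t ∈ interior D, HasDerivWithinAt g' (g'' t) (interior D) t)
    (hm : ∀ t ∈ interior D, m ≤ g'' t) : StrongConvexOn D m g := by
  have hq (t : ℝ) : HasDerivAt (fun t ↦ m / 2 * t ^ 2) (m * t) t :=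
    ((hasDerivAt_pow 2 t).const_mul (m / 2)).congr_deriv (by ring)
  simp only [strongConvexOn_iff_convex, Real.norm_eq_abs, sq_abs]
  exact convexOn_of_hasDerivWithinAt2_nonneg hD (hg.sub (by fun_prop))
    (fun t ht ↦ (hg' t ht).sub (hq t).hasDerivWithinAt)
    (fun t ht ↦ (hg'' t ht).sub ((hasDerivWithinAt_id t _).const_mul m))
    (fun t ht ↦ by linarith [hm t ht])

lemma strongConvexOn_of_comp_lineMap (hs : Convex ℝ s)
    (hf : ∀ x ∈ s, ∀ y ∈ s, StrongConvexOn (Set.Icc 0 1) (m * ‖y - x‖ ^ 2)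
      fun t : ℝ ↦ f (AffineMap.lineMap x y t)) :
    StrongConvexOn s m f := by
  refine ⟨hs, fun x hx y hy a b ha hb hab ↦ ?_⟩
  have hline := (hf x hx y hy).2 (Set.left_mem_Icc.2 zero_le_one) (Set.right_mem_Icc.2 zero_le_one)
    ha hb hab
  have hb_eq : AffineMap.lineMap x y b = a • x + b • y := by
    rw [AffineMap.lineMap_apply_module, ← hab, add_sub_cancel_right]
  simp only [smul_eq_mul, mul_zero, mul_one, zero_add, hb_eq, AffineMap.lineMap_apply_zero,
    AffineMap.lineMap_apply_one, zero_sub, norm_neg, norm_one, one_pow] at hline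
  simp only [norm_sub_rev x y, smul_eq_mul]
  linarith

theorem strongConvexOn_of_le_iteratedFDeriv_two (hs : Convex ℝ s)
    (hf : ∀ x ∈ s, ContDiffAt ℝ 2 f x)
    (hm : ∀ x ∈ s, ∀ v, m * ‖v‖ ^ 2 ≤ iteratedFDeriv ℝ 2 f x ![v, v]) :
    StrongConvexOn s m f := by
  refine strongConvexOn_of_comp_lineMap hs fun x hx y hy ↦ ?_
  set v := y - x
  set γ : ℝ → F := fun t ↦ AffineMap.lineMap x y t
  have hγs (t) (ht : t ∈ Set.Icc (0 : ℝ) 1) : γ t ∈ s := hs.lineMap_mem hx hy ht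
  have hγ (t : ℝ) : HasDerivAt γ v t := AffineMap.hasDerivAt_lineMap
  have hfγ (t) (ht : t ∈ Set.Icc (0 : ℝ) 1) :
      HasDerivAt (fun t ↦ f (γ t)) (fderiv ℝ f (γ t) v) t :=
    ((hf _ (hγs t ht)).differentiableAt two_ne_zero).hasFDerivAt.comp_hasDerivAt t (hγ t)
  have hfγ' (t) (ht : t ∈ Set.Icc (0 : ℝ) 1) :
      HasDerivAt (fun t ↦ fderiv ℝ f (γ t) v) (fderiv ℝ (fderiv ℝ f) (γ t) v v) t := by
    have hdf : DifferentiableAt ℝ (fderiv ℝ f) (γ t) :=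
      ((hf _ (hγs t ht)).fderiv_right (m := 1) (by norm_num)).differentiableAt one_ne_zero
    simpa using (hdf.hasFDerivAt.comp_hasDerivAt t (hγ t)).clm_apply (hasDerivAt_const t v)
  refine strongConvexOn_of_hasDerivWithinAt2_ge (convex_Icc 0 1) (HasDerivAt.continuousOn hfγ)
    (fun t ht ↦ (hfγ t (interior_subset ht)).hasDerivWithinAt)
    (fun t ht ↦ (hfγ' t (interior_subset ht)).hasDerivWithinAt) fun t ht ↦ ?_
  simpa [iteratedFDeriv_two_apply] using hm (γ t) (hγs t (interior_subset ht)) v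

lemma exp_le_midpoint_of_strongConvexOn (hf : StrongConvexOn s m f) {x h : F} (hadd : x + h ∈ s)
    (hsub : x - h ∈ s) :
    Real.exp (f x + m / 2 * ‖h‖ ^ 2) ≤ (Real.exp (f (x + h)) + Real.exp (f (x - h))) / 2 := by
  have hhalf : (0 : ℝ) ≤ 1 / 2 := by norm_num
  have hmid : (1 / 2 : ℝ) • (x + h) + (1 / 2 : ℝ) • (x - h) = x := by module
  have hdist : ‖x + h - (x - h)‖ = 2 * ‖h‖ := by
    rw [add_sub_sub_cancel, ← two_smul ℝ h, norm_smul, Real.norm_two]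
  have hfx := hf.2 hadd hsub hhalf hhalf (add_halves 1)
  simp only [hmid, hdist, smul_eq_mul] at hfx
  calc Real.exp (f x + m / 2 * ‖h‖ ^ 2)
      ≤ Real.exp ((1 / 2) • f (x + h) + (1 / 2) • f (x - h)) := by
        rw [Real.exp_le_exp, smul_eq_mul, smul_eq_mul]
        linarith
    _ ≤ (1 / 2) • Real.exp (f (x + h)) + (1 / 2) • Real.exp (f (x - h)) :=
        convexOn_exp.2 (Set.mem_univ _) (Set.mem_univ _) hhalf hhalf (add_halves 1)
    _ = (Real.exp (f (x + h)) + Real.exp (f (x - h))) / 2 := by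
        simp only [smul_eq_mul]
        ring

lemma add_le_of_strongConvexOn_of_isLocalMax (hf : StrongConvexOn s m f) {z x : F} (hz : s ∈ 𝓝 z)
    (hx : x ∈ s) (hmax : IsLocalMax f z) : f z + m / 2 * ‖x - z‖ ^ 2 ≤ f x := by
  -- `w t` lies behind `z` as seen from `x`, so that `z` is interior to the segment `[w t, x]`.
  let w : ℝ → F := fun t ↦ z - t • (x - z)
  have hw : Tendsto w (𝓝[>] 0) (𝓝 z) := by
    have : Continuous w := by fun_prop
    simpa [w] using (this.tendsto 0).mono_left nhdsWithin_le_nhds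
  have hlim : Tendsto (fun t : ℝ ↦ f z + (1 + t) * (m / 2 * ‖x - z‖ ^ 2)) (𝓝[>] 0)
      (𝓝 (f z + m / 2 * ‖x - z‖ ^ 2)) := by
    have : Continuous fun t : ℝ ↦ f z + (1 + t) * (m / 2 * ‖x - z‖ ^ 2) := by fun_prop
    simpa using (this.tendsto 0).mono_left nhdsWithin_le_nhds
  refine le_of_tendsto hlim ?_
  filter_upwards [hw.eventually hmax, hw.eventually hz, self_mem_nhdsWithin]
    with t hwz hws (ht : 0 < t)
  have hcomb : (1 / (1 + t)) • w t + (t / (1 + t)) • x = z := by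
    simp only [w]
    match_scalars <;> field_simp <;> ring
  have hdist : ‖w t - x‖ = (1 + t) * ‖x - z‖ := by
    rw [show w t - x = -((1 + t) • (x - z)) by simp only [w]; module, norm_neg, norm_smul,
      Real.norm_of_nonneg (by positivity)]
  have key := hf.2 hws hx (show 0 ≤ 1 / (1 + t) by positivity) (show 0 ≤ t / (1 + t) by positivity)
    (by field_simp)
  simp only [hcomb, hdist, smul_eq_mul] at key
  field_simp at key
  refine le_of_mul_le_mul_left ?_ ht
  linarith

end StrongConvexity

lemma continuous_of_strongConvexOn_univ {V : Type*} [NormedAddCommGroup V] [InnerProductSpace ℝ V]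
    [FiniteDimensional ℝ V] {f : V → ℝ} {m : ℝ} (hf : StrongConvexOn Set.univ m f) :
    Continuous f := by
  have hconv := (strongConvexOn_iff_convex.1 hf).locallyLipschitz.continuous
  have hquad : Continuous fun x : V ↦ m / 2 * ‖x‖ ^ 2 := by fun_prop
  simpa only [sub_add_cancel] using hconv.fun_add hquad

lemma isNegInvariant_restrict {G : Type*} [MeasurableSpace G] [InvolutiveNeg G] [MeasurableNeg G]
    (μ : Measure G) [μ.IsNegInvariant] {s : Set G} (hs : -s = s) :
    (μ.restrict s).IsNegInvariant := by
  refine ⟨?_⟩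
  calc (μ.restrict s).map Neg.neg = (μ.restrict (-s)).map Neg.neg := by rw [hs]
    _ = (μ.map Neg.neg).restrict s := ((MeasurableEquiv.neg G).restrict_map μ s).symm
    _ = μ.restrict s := by rw [← Measure.neg_def, Measure.neg_eq_self]

lemma integral_le_integral_of_le_add_neg_div_two {G : Type*} [MeasurableSpace G] [AddGroup G]
    [MeasurableNeg G] {ν : Measure G} [ν.IsNegInvariant] {f g : G → ℝ} (hf : 0 ≤ f)
    (hg : Integrable g ν) (hfg : ∀ x, f x ≤ (g x + g (-x)) / 2) :
    ∫ x, f x ∂ν ≤ ∫ x, g x ∂ν :=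
  calc ∫ x, f x ∂ν ≤ ∫ x, (g x + g (-x)) / 2 ∂ν :=
        integral_mono_of_nonneg (.of_forall hf) ((hg.add hg.comp_neg).div_const 2) (.of_forall hfg)
    _ = ∫ x, g x ∂ν := by
        rw [integral_div, integral_add hg hg.comp_neg, integral_neg_eq_self, add_self_div_two]

theorem tendsto_setIntegral_ball_cobounded {X A : Type*} [PseudoMetricSpace X] [MeasurableSpace X]
    [OpensMeasurableSpace X] [NormedAddCommGroup A] [NormedSpace ℝ A] {μ : Measure X} {g : X → A}
    (hg : Integrable g μ) (r : ℝ) :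
    Tendsto (fun x ↦ ∫ y in ball x r, g y ∂μ) (Bornology.cobounded X) (𝓝 0) := by
  rcases isEmpty_or_nonempty X with _ | ⟨⟨o⟩⟩
  · exact tendsto_of_isEmpty
  have : (Bornology.cobounded X).IsCountablyGenerated := by
    rw [← comap_dist_left_atTop o]
    infer_instance
  simp_rw [← integral_indicator measurableSet_ball]
  rw [← integral_zero X A]
  refine tendsto_integral_filter_of_dominated_convergence (fun y ↦ ‖g y‖)
    (.of_forall fun x ↦ (hg.indicator measurableSet_ball).aestronglyMeasurable)
    (.of_forall fun x ↦ .of_forall fun y ↦ norm_indicator_le_norm_self g y) hg.norm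
    (.of_forall fun y ↦ tendsto_const_nhds.congr' ?_)
  have hfar : ∀ᶠ x in Bornology.cobounded X, x ∉ ball y r :=
    Bornology.isBounded_def.1 isBounded_ball
  filter_upwards [hfar] with x hx
  rw [Set.indicator_of_notMem (mt mem_ball_comm.1 hx)]

section NormedSpace

variable {F : Type*} [NormedAddCommGroup F] [NormedSpace ℝ F] [MeasurableSpace F] {f : F → ℝ}
  {m : ℝ}

lemma exp_mul_integral_exp_sq_norm_le_of_strongConvexOn [MeasurableNeg F] {ν : Measure F}
    [ν.IsNegInvariant] (hf : StrongConvexOn Set.univ m f) {x : F}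
    (hint : Integrable (fun h ↦ Real.exp (f (x + h))) ν) :
    Real.exp (f x) * ∫ h, Real.exp (m / 2 * ‖h‖ ^ 2) ∂ν ≤ ∫ h, Real.exp (f (x + h)) ∂ν := by
  rw [← integral_const_mul]
  refine integral_le_integral_of_le_add_neg_div_two (fun h ↦ by positivity) hint fun h ↦ ?_
  rw [← Real.exp_add, ← sub_eq_add_neg]
  exact exp_le_midpoint_of_strongConvexOn hf (Set.mem_univ _) (Set.mem_univ _)

lemma tendsto_exp_cocompact_of_strongConvexOn [ProperSpace F] [BorelSpace F] {μ : Measure F}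
    [μ.IsAddHaarMeasure] (hf : StrongConvexOn Set.univ m f)
    (hint : Integrable (fun x ↦ Real.exp (f x)) μ) :
    Tendsto (fun x ↦ Real.exp (f x)) (cocompact F) (𝓝 0) := by
  set c := ∫ h in ball (0 : F) 1, Real.exp (m / 2 * ‖h‖ ^ 2) ∂μ
  have hc : 0 < c := by
    have : NeZero (μ.restrict (ball (0 : F) 1)) :=
      ⟨by simpa using (measure_ball_pos μ (0 : F) one_pos).ne'⟩
    have hcont : Continuous fun h : F ↦ Real.exp (m / 2 * ‖h‖ ^ 2) := by fun_prop
    exact integral_exp_pos ((hcont.continuousOn.integrableOn_compact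
      (isCompact_closedBall 0 1)).mono_set ball_subset_closedBall)
  have hball (x : F) : Real.exp (f x) ≤ (∫ y in ball x 1, Real.exp (f y) ∂μ) / c := by
    have : (μ.restrict (ball (0 : F) 1)).IsNegInvariant := isNegInvariant_restrict μ (by simp)
    rw [le_div_iff₀ hc]
    calc Real.exp (f x) * c ≤ ∫ h in ball 0 1, Real.exp (f (x + h)) ∂μ :=
          exp_mul_integral_exp_sq_norm_le_of_strongConvexOn hf (hint.comp_add_left x).integrableOn
      _ = ∫ y in ball x 1, Real.exp (f y) ∂μ := by
          simpa using (measurePreserving_add_left μ x).setIntegral_preimage_emb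
            (measurableEmbedding_addLeft x) (fun y ↦ Real.exp (f y)) (ball x 1)
  refine squeeze_zero (fun x ↦ (Real.exp_pos _).le) hball ?_
  rw [← cobounded_eq_cocompact]
  simpa using (tendsto_setIntegral_ball_cobounded hint 1).div_const c

end NormedSpace

lemma VT.strongConvexOn_log {N : ℕ} {T : ℝ} (hT : 0 < T) {u : E N → ℝ} (hu : VT N T u) :
    StrongConvexOn Set.univ (-(1 / (2 * T))) fun x ↦ Real.log (u x) := by
  obtain ⟨hC2, -, hpos, -, hHess⟩ := hu
  refine strongConvexOn_of_le_iteratedFDeriv_two convex_univ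
    (fun x _ ↦ (hC2.log fun y ↦ (hpos y).ne').contDiffAt) fun x _ v ↦ ?_
  rw [neg_mul, one_div_mul_eq_div, ← neg_div, div_le_iff₀ (by positivity)]
  linarith [hHess x v]

section InnerProductSpace

variable {V : Type*} [NormedAddCommGroup V] [InnerProductSpace ℝ V] [FiniteDimensional ℝ V]
  [MeasurableSpace V] [BorelSpace V] {T : ℝ}

lemma exp_le_mul_integral_of_strongConvexOn (hT : 0 < T) {f : V → ℝ}
    (hf : StrongConvexOn Set.univ (-(1 / (2 * T))) f) (hint : Integrable fun x ↦ Real.exp (f x))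
    (x : V) :
    Real.exp (f x) ≤ (4 * Real.pi * T) ^ (-(Module.finrank ℝ V : ℝ) / 2) * ∫ y, Real.exp (f y) := by
  have hgauss : ∫ h : V, Real.exp (-(1 / (2 * T)) / 2 * ‖h‖ ^ 2) =
      (4 * Real.pi * T) ^ ((Module.finrank ℝ V : ℝ) / 2) := by
    rw [neg_div, GaussianFourier.integral_rexp_neg_mul_sq_norm (by positivity)]
    congr 1
    field_simp
    norm_num
  have key := exp_mul_integral_exp_sq_norm_le_of_strongConvexOn hf (hint.comp_add_left x)
  rw [hgauss, integral_add_left_eq_self (μ := volume) (fun y ↦ Real.exp (f y))] at key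
  rwa [neg_div, Real.rpow_neg (by positivity), inv_mul_eq_div, le_div_iff₀ (by positivity)]

theorem statement_2_general (hT : 0 < T) {u : V → ℝ}
    (hpos : ∀ x, 0 < u x) (hint : Integrable u)
    (hconv : StrongConvexOn Set.univ (-(1 / (2 * T))) fun x ↦ Real.log (u x)) :
    Tendsto u (cocompact V) (𝓝 0) ∧
      ∃ z₀ : V, ∀ x : V,
        0 < u z₀ * Real.exp (-‖x - z₀‖ ^ 2 / (4 * T)) ∧
        u z₀ * Real.exp (-‖x - z₀‖ ^ 2 / (4 * T)) ≤ u x ∧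
        u x ≤ u z₀ ∧
        u z₀ ≤ (4 * Real.pi * T) ^ (-(Module.finrank ℝ V : ℝ) / 2) * ∫ y, u y := by
  obtain ⟨f, rfl⟩ : ∃ f : V → ℝ, u = fun x ↦ Real.exp (f x) :=
    ⟨fun x ↦ Real.log (u x), funext fun x ↦ (Real.exp_log (hpos x)).symm⟩
  simp only [Real.log_exp] at hconv
  have hlim := tendsto_exp_cocompact_of_strongConvexOn hconv hint
  have hcont : Continuous fun x ↦ Real.exp (f x) :=
    Real.continuous_exp.comp (continuous_of_strongConvexOn_univ hconv)
  obtain ⟨z, hz⟩ := hcont.exists_forall_ge' 0 (hlim.eventually_le_const (hpos 0))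
  refine ⟨hlim, z, fun x ↦ ⟨by positivity, ?_, hz x,
    exp_le_mul_integral_of_strongConvexOn hT hconv hint z⟩⟩
  have hlower : f z + -(1 / (2 * T)) / 2 * ‖x - z‖ ^ 2 ≤ f x :=
    add_le_of_strongConvexOn_of_isLocalMax hconv univ_mem (Set.mem_univ x)
      (.of_forall fun y ↦ Real.exp_le_exp.1 (hz y))
  rw [← Real.exp_add, Real.exp_le_exp]
  convert! hlower using 2
  field_simp
  norm_num

end InnerProductSpace

/-- for `u ∈ 𝒱𝒯₁⁺(T)`, `u → 0` at infinity and there is `z₀` with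
`0 < u(z₀) exp(-|x-z₀|²/(4T)) ≤ u(x) ≤ u(z₀) ≤ (4πT)^{-N/2}` for all `x`. -/
theorem statement_2 (N : ℕ) (T : ℝ) (hT : 0 < T) (u : E N → ℝ) (hu : VT N T u) :
    Tendsto u (cocompact (E N)) (nhds 0) ∧
      ∃ z₀ : E N, ∀ x : E N,
        0 < u z₀ * Real.exp (-‖x - z₀‖ ^ 2 / (4 * T)) ∧
        u z₀ * Real.exp (-‖x - z₀‖ ^ 2 / (4 * T)) ≤ u x ∧
        u x ≤ u z₀ ∧
        u z₀ ≤ (4 * Real.pi * T) ^ (-(N : ℝ) / 2) := by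
  simpa [hu.2.2.2.1] using
    statement_2_general hT hu.2.2.1 hu.2.1 (hu.strongConvexOn_log hT)
end
end

section
/- Let T > 0 and u ∈ VT₁⁺(T). Then |∇u(x)| → 0 as |x| → ∞, and for every x ∈ ℝ^N, |∇u(x)|² ≤ (4π/e) (4πT)^{-(N+2)/2} u(x) ≤ (4π/e) (4πT)^{-N-1}. -/
open MeasureTheory Filter Metric
open scoped ENNReal NNReal Topology

noncomputable section

/-!
By Taylor's formula along segments, a lower bound on the Hessian of `log u` bounds `u` from below by
a Gaussian through each of its points: `u (x + v) ≥ u x * exp (⟪∇ log u x, v⟫ - ‖v‖² / (4T))`.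
In dimension `N`, integrating in `v` gives `u x * exp (T ‖∇ log u x‖²) ≤ (4πT)^(-N/2) ∫ u`, which
bounds `u`, and together with `e * s ≤ exp s` also `‖∇u‖² = u² ‖∇ log u‖²`. Integrating instead
against the weight `exp (-‖v‖²)` bounds `u x` by a multiple of the convolution of the integrable
function `u` with a Gaussian. This vanishes at infinity, hence so do `u` and, by the gradient bound,
`∇u`.
-/

open scoped Gradient InnerProductSpace ZeroAtInfty

theorem add_fderiv_add_half_le_of_le_iteratedFDeriv_two {F : Type*} [NormedAddCommGroup F]
    [NormedSpace ℝ F] {f : F → ℝ} {x v : F} {c : ℝ}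
    (hf : ∀ t ∈ Set.Icc (0 : ℝ) 1, ContDiffAt ℝ 2 f (x + t • v))
    (hc : ∀ t ∈ Set.Icc (0 : ℝ) 1, c ≤ iteratedFDeriv ℝ 2 f (x + t • v) ![v, v]) :
    f x + fderiv ℝ f x v + c / 2 ≤ f (x + v) := by
  have hvec : (fun _ : Fin 2 => v) = ![v, v] := by ext i; fin_cases i <;> rfl
  have hTaylor : f (x + v) = f x + fderiv ℝ f x v +
      ∫ t in (0 : ℝ)..1, (1 - t) * iteratedFDeriv ℝ 2 f (x + t • v) ![v, v] := by
    simpa [Finset.sum_range_succ, hvec] using map_add_eq_sum_add_integral_iteratedFDeriv (n := 1) hf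
  have hcont : ContinuousOn (fun t : ℝ => (1 - t) * iteratedFDeriv ℝ 2 f (x + t • v) ![v, v])
      (Set.Icc 0 1) := fun t ht => by
    have hD : ContinuousAt (iteratedFDeriv ℝ 2 f) (x + t • v) :=
      ((hf t ht).iteratedFDeriv_right (i := 2) (m := 0) (by simp)).continuousAt
    have hDv : ContinuousAt (fun s : ℝ => iteratedFDeriv ℝ 2 f (x + s • v)) t :=
      hD.comp (x := t) (f := fun s : ℝ => x + s • v) (by fun_prop)
    exact ContinuousWithinAt.mul (by fun_prop) (hDv.continuousWithinAt.eval_const _)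
  have hhalf : ∫ t in (0 : ℝ)..1, (1 - t) * c = c / 2 := by
    rw [intervalIntegral.integral_mul_const, intervalIntegral.integral_sub (by simp) (by simp)]
    norm_num [div_eq_inv_mul]
  rw [hTaylor, ← hhalf]
  gcongr
  refine intervalIntegral.integral_mono_on zero_le_one
    (Continuous.intervalIntegrable (by fun_prop) _ _)
    (ContinuousOn.intervalIntegrable (by rwa [Set.uIcc_of_le zero_le_one])) fun t ht => ?_
  exact mul_le_mul_of_nonneg_left (hc t ht) (sub_nonneg.2 ht.2)

theorem tendsto_integral_smul_add_cocompact {G F : Type*} [NormedAddCommGroup G] [ProperSpace G]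
    [MeasurableSpace G] [BorelSpace G] {μ : Measure G} [μ.IsAddLeftInvariant]
    [NormedAddCommGroup F] [NormedSpace ℝ F] {u : G → F} (hu : Integrable u μ) (g : C₀(G, ℝ)) :
    Tendsto (fun x => ∫ v, g v • u (x + v) ∂μ) (cocompact G) (𝓝 0) := by
  have htranslate (x : G) : ∫ v, g v • u (x + v) ∂μ = ∫ y, g (-x + y) • u y ∂μ := by
    simpa only [neg_add_cancel_left] using
      integral_add_left_eq_self (fun y => g (-x + y) • u y) x
  have hcocompact : (cocompact G).IsCountablyGenerated := by
    rw [← Metric.cobounded_eq_cocompact, ← comap_norm_atTop]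
    infer_instance
  have hpointwise (y : G) : Tendsto (fun x => g (-x + y) • u y) (cocompact G) (𝓝 0) := by
    have hmove : Tendsto (fun x : G => -x + y) (cocompact G) (cocompact G) :=
      ((Homeomorph.neg G).trans (Homeomorph.addRight y)).isClosedEmbedding.tendsto_cocompact
    simpa using ((zero_at_infty g).comp hmove).smul_const (u y)
  simp only [htranslate]
  rw [← integral_zero G F (μ := μ)]
  refine tendsto_integral_filter_of_dominated_convergence (fun y => ‖g.toBCF‖ * ‖u y‖)
    (Eventually.of_forall fun x => ?_)
    (Eventually.of_forall fun x => Eventually.of_forall fun y => ?_)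
    (hu.norm.const_mul _) (Eventually.of_forall hpointwise)
  · exact (Continuous.aestronglyMeasurable (by fun_prop)).smul hu.aestronglyMeasurable
  · rw [norm_smul]
    gcongr
    exact g.toBCF.norm_coe_le_norm (-x + y)

theorem tendsto_exp_neg_sq_norm_cocompact {G : Type*} [NormedAddCommGroup G] [ProperSpace G] :
    Tendsto (fun v : G => Real.exp (-‖v‖ ^ 2)) (cocompact G) (𝓝 0) :=
  Real.tendsto_exp_neg_atTop_nhds_zero.comp
    ((tendsto_pow_atTop two_ne_zero).comp tendsto_norm_cocompact_atTop)

theorem gradient_log {V : Type*} [NormedAddCommGroup V] [InnerProductSpace ℝ V] [CompleteSpace V]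
    {u : V → ℝ} {x : V} (hu : DifferentiableAt ℝ u x) (hx : u x ≠ 0) :
    ∇ (fun y => Real.log (u y)) x = (u x)⁻¹ • ∇ u x := by
  simp only [gradient, fderiv.log hu hx, map_smulₛₗ, conj_trivial]

section Gaussian

variable {V : Type*} [NormedAddCommGroup V] [InnerProductSpace ℝ V] [FiniteDimensional ℝ V]
  [MeasurableSpace V] [BorelSpace V] {b : ℝ}

theorem integral_exp_inner_sub_mul_sq_norm (hb : 0 < b) (p : V) :
    ∫ v : V, Real.exp (⟪p, v⟫_ℝ - b * ‖v‖ ^ 2) =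
      (Real.pi / b) ^ ((Module.finrank ℝ V : ℝ) / 2) * Real.exp (‖p‖ ^ 2 / (4 * b)) := by
  have hcomplex := GaussianFourier.integral_cexp_neg_mul_sq_norm_add (b := (b : ℂ)) hb 1 p
  rw [← Complex.ofReal_inj, ← integral_complex_ofReal, Complex.ofReal_mul,
    Complex.ofReal_cpow (by positivity)]
  push_cast
  convert! hcomplex using 4 <;> ring_nf

theorem integrable_exp_inner_sub_mul_sq_norm (hb : 0 < b) (p : V) :
    Integrable fun v : V => Real.exp (⟪p, v⟫_ℝ - b * ‖v‖ ^ 2) :=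
  Integrable.of_integral_ne_zero <| by
    rw [integral_exp_inner_sub_mul_sq_norm hb]
    positivity

theorem mul_exp_sq_norm_div_le_integral (hb : 0 < b) {w : V → ℝ} (hw : Integrable w) {c : ℝ} {p : V}
    (h : ∀ v, c * Real.exp (⟪p, v⟫_ℝ - b * ‖v‖ ^ 2) ≤ w v) :
    c * ((Real.pi / b) ^ ((Module.finrank ℝ V : ℝ) / 2) * Real.exp (‖p‖ ^ 2 / (4 * b))) ≤
      ∫ v, w v := by
  rw [← integral_exp_inner_sub_mul_sq_norm hb, ← integral_const_mul]
  exact integral_mono ((integrable_exp_inner_sub_mul_sq_norm hb p).const_mul c) hw h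

end Gaussian

/-- The class `𝒱𝒯⁺(T)` on an inner product space, without integrability or normalization: the
positive `C²` functions satisfying Hamilton's matrix Harnack inequality `Hess (log u) ≥ -1 / (2T)`,
written without division as in `VT`. -/
structure MatrixHarnack {V : Type*} [NormedAddCommGroup V] [InnerProductSpace ℝ V] (T : ℝ)
    (u : V → ℝ) : Prop where
  contDiff : ContDiff ℝ 2 u
  pos : ∀ x, 0 < u x
  hessian_log_bound : ∀ x v : V,
    0 ≤ 2 * T * iteratedFDeriv ℝ 2 (fun y => Real.log (u y)) x ![v, v] + ‖v‖ ^ 2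

namespace MatrixHarnack

variable {V : Type*} [NormedAddCommGroup V] [InnerProductSpace ℝ V] {T : ℝ} {u : V → ℝ}

theorem mul_exp_inner_gradient_log_le [CompleteSpace V] (hu : MatrixHarnack T u) (hT : 0 < T)
    (x v : V) :
    u x * Real.exp (⟪∇ (fun y => Real.log (u y)) x, v⟫_ℝ - (4 * T)⁻¹ * ‖v‖ ^ 2) ≤ u (x + v) := by
  have hlog : ContDiff ℝ 2 fun y => Real.log (u y) := hu.contDiff.log fun y => (hu.pos y).ne'
  have hTaylor := add_fderiv_add_half_le_of_le_iteratedFDeriv_two (x := x) (v := v)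
    (c := -((2 * T)⁻¹ * ‖v‖ ^ 2)) (fun t _ => hlog.contDiffAt) fun t _ => by
      rw [neg_le_iff_add_nonneg, ← mul_le_mul_iff_of_pos_left (by positivity : 0 < 2 * T),
        mul_zero, mul_add, mul_inv_cancel_left₀ (by positivity)]
      exact hu.hessian_log_bound _ v
  rw [inner_gradient_left, ← Real.log_le_log_iff (by have := hu.pos x; positivity) (hu.pos _),
    Real.log_mul (hu.pos x).ne' (Real.exp_pos _).ne', Real.log_exp]
  refine le_of_eq_of_le ?_ hTaylor
  field_simp
  ring

theorem gradient_eq_smul_gradient_log [CompleteSpace V] (hu : MatrixHarnack T u) (x : V) :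
    ∇ u x = u x • ∇ (fun y => Real.log (u y)) x := by
  rw [gradient_log (hu.contDiff.differentiable two_ne_zero x) (hu.pos x).ne',
    smul_inv_smul₀ (hu.pos x).ne']

variable [FiniteDimensional ℝ V] [MeasurableSpace V] [BorelSpace V]

theorem mul_exp_mul_sq_norm_gradient_log_le (hu : MatrixHarnack T u) (hT : 0 < T)
    (hui : Integrable u) (x : V) :
    u x * Real.exp (T * ‖∇ (fun y => Real.log (u y)) x‖ ^ 2) ≤
      (4 * Real.pi * T) ^ (-(Module.finrank ℝ V : ℝ) / 2) * ∫ y, u y := by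
  have hgauss := mul_exp_sq_norm_div_le_integral (b := (4 * T)⁻¹) (by positivity)
    (hui.comp_add_left x) (hu.mul_exp_inner_gradient_log_le hT x)
  have hbase : Real.pi / (4 * T)⁻¹ = 4 * Real.pi * T := by field_simp
  have hexponent (s : ℝ) : s / (4 * (4 * T)⁻¹) = T * s := by field_simp
  rw [integral_add_left_eq_self u x, hbase, hexponent, mul_left_comm] at hgauss
  rwa [neg_div, Real.rpow_neg (by positivity), ← div_eq_inv_mul, le_div_iff₀' (by positivity)]

theorem le_rpow_mul_integral (hu : MatrixHarnack T u) (hT : 0 < T) (hui : Integrable u) (x : V) :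
    u x ≤ (4 * Real.pi * T) ^ (-(Module.finrank ℝ V : ℝ) / 2) * ∫ y, u y :=
  (le_mul_of_one_le_right (hu.pos x).le (Real.one_le_exp (by positivity))).trans
    (hu.mul_exp_mul_sq_norm_gradient_log_le hT hui x)

theorem sq_norm_gradient_le (hu : MatrixHarnack T u) (hT : 0 < T) (hui : Integrable u) (x : V) :
    ‖∇ u x‖ ^ 2 ≤ 4 * Real.pi / Real.exp 1 *
      (4 * Real.pi * T) ^ (-((Module.finrank ℝ V : ℝ) + 2) / 2) * (∫ y, u y) * u x := by
  set p := ∇ (fun y => Real.log (u y)) x with hp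
  set K := (4 * Real.pi * T) ^ (-(Module.finrank ℝ V : ℝ) / 2) with hK
  have hpow : (4 * Real.pi * T) ^ (-((Module.finrank ℝ V : ℝ) + 2) / 2) =
      K / (4 * Real.pi * T) := by
    rw [hK, ← Real.rpow_sub_one (by positivity)]
    ring_nf
  have hexp : u x * (Real.exp 1 * (T * ‖p‖ ^ 2)) ≤ K * ∫ y, u y :=
    (mul_le_mul_of_nonneg_left Real.exp_one_mul_le_exp (hu.pos x).le).trans
      (hu.mul_exp_mul_sq_norm_gradient_log_le hT hui x)
  calc ‖∇ u x‖ ^ 2 = u x * (Real.exp 1 * (T * ‖p‖ ^ 2)) * (u x / (Real.exp 1 * T)) := by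
        rw [hu.gradient_eq_smul_gradient_log, norm_smul, Real.norm_of_nonneg (hu.pos x).le, ← hp]
        field_simp
    _ ≤ (K * ∫ y, u y) * (u x / (Real.exp 1 * T)) := by
        have := hu.pos x
        gcongr
    _ = _ := by
        rw [hpow]
        field_simp

theorem mul_le_integral_exp_neg_sq_norm_mul (hu : MatrixHarnack T u) (hT : 0 < T)
    (hui : Integrable u) (x : V) :
    u x * (Real.pi / ((4 * T)⁻¹ + 1)) ^ ((Module.finrank ℝ V : ℝ) / 2) ≤
      ∫ v, Real.exp (-‖v‖ ^ 2) * u (x + v) := by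
  set p := ∇ (fun y => Real.log (u y)) x
  have hweight_int : Integrable fun v => Real.exp (-‖v‖ ^ 2) * u (x + v) :=
    (hui.comp_add_left x).bdd_mul (c := 1) (Continuous.aestronglyMeasurable (by fun_prop))
      (Eventually.of_forall fun v => by simp)
  have hminorant (v : V) : u x * Real.exp (⟪p, v⟫_ℝ - ((4 * T)⁻¹ + 1) * ‖v‖ ^ 2) ≤
      Real.exp (-‖v‖ ^ 2) * u (x + v) := by
    calc _ = Real.exp (-‖v‖ ^ 2) * (u x * Real.exp (⟪p, v⟫_ℝ - (4 * T)⁻¹ * ‖v‖ ^ 2)) := by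
          rw [mul_left_comm, ← Real.exp_add]
          ring_nf
      _ ≤ _ := mul_le_mul_of_nonneg_left (hu.mul_exp_inner_gradient_log_le hT x v)
          (Real.exp_pos _).le
  refine le_trans (mul_le_mul_of_nonneg_left ?_ (hu.pos x).le)
    (mul_exp_sq_norm_div_le_integral (by positivity) hweight_int hminorant)
  exact le_mul_of_one_le_right (by positivity) (Real.one_le_exp (by positivity))

theorem tendsto_zero_cocompact (hu : MatrixHarnack T u) (hT : 0 < T) (hui : Integrable u) :
    Tendsto u (cocompact V) (𝓝 0) := by
  let gaussian : C₀(V, ℝ) :=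
    ⟨⟨fun v => Real.exp (-‖v‖ ^ 2), by fun_prop⟩, tendsto_exp_neg_sq_norm_cocompact⟩
  set C := (Real.pi / ((4 * T)⁻¹ + 1)) ^ ((Module.finrank ℝ V : ℝ) / 2)
  have hC : 0 < C := by positivity
  have hle (x : V) : u x ≤ (∫ v, gaussian v • u (x + v)) / C :=
    (le_div_iff₀ hC).2 (hu.mul_le_integral_exp_neg_sq_norm_mul hT hui x)
  refine squeeze_zero (fun x => (hu.pos x).le) hle ?_
  simpa using (tendsto_integral_smul_add_cocompact hui gaussian).div_const C

theorem tendsto_norm_gradient_cocompact (hu : MatrixHarnack T u) (hT : 0 < T)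
    (hui : Integrable u) : Tendsto (fun x => ‖∇ u x‖) (cocompact V) (𝓝 0) := by
  have hsq : Tendsto (fun x => ‖∇ u x‖ ^ 2) (cocompact V) (𝓝 0) :=
    squeeze_zero (fun _ => sq_nonneg _) (hu.sq_norm_gradient_le hT hui)
      (by simpa using (hu.tendsto_zero_cocompact hT hui).const_mul _)
  simpa using hsq.sqrt

end MatrixHarnack

theorem statement_3_general {V : Type*} [NormedAddCommGroup V] [InnerProductSpace ℝ V]
    [FiniteDimensional ℝ V] [MeasurableSpace V] [BorelSpace V] {T : ℝ} (hT : 0 < T) {u : V → ℝ}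
    (hu : MatrixHarnack T u) (hui : Integrable u) :
    Tendsto (fun x => ‖∇ u x‖) (cocompact V) (𝓝 0) ∧
      ∀ x : V,
        ‖∇ u x‖ ^ 2 ≤ 4 * Real.pi / Real.exp 1 *
            (4 * Real.pi * T) ^ (-((Module.finrank ℝ V : ℝ) + 2) / 2) * (∫ y, u y) * u x ∧
        4 * Real.pi / Real.exp 1 *
            (4 * Real.pi * T) ^ (-((Module.finrank ℝ V : ℝ) + 2) / 2) * (∫ y, u y) * u x ≤
          4 * Real.pi / Real.exp 1 *
            (4 * Real.pi * T) ^ (-(Module.finrank ℝ V : ℝ) - 1) * (∫ y, u y) ^ 2 := by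
  refine ⟨hu.tendsto_norm_gradient_cocompact hT hui,
    fun x => ⟨hu.sq_norm_gradient_le hT hui x, ?_⟩⟩
  have hmass : 0 ≤ ∫ y, u y := integral_nonneg fun y => (hu.pos y).le
  have hpow : (4 * Real.pi * T) ^ (-(Module.finrank ℝ V : ℝ) - 1) =
      (4 * Real.pi * T) ^ (-((Module.finrank ℝ V : ℝ) + 2) / 2) *
        (4 * Real.pi * T) ^ (-(Module.finrank ℝ V : ℝ) / 2) := by
    rw [← Real.rpow_add (by positivity)]
    ring_nf
  refine (mul_le_mul_of_nonneg_left (hu.le_rpow_mul_integral hT hui x) (by positivity)).trans_eq ?_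
  rw [hpow]
  ring

/-- for `u ∈ 𝒱𝒯₁⁺(T)`, `|∇u| → 0` at infinity and
`|∇u(x)|² ≤ (4π/e)(4πT)^{-(N+2)/2} u(x) ≤ (4π/e)(4πT)^{-N-1}`. -/
theorem statement_3 (N : ℕ) (T : ℝ) (hT : 0 < T) (u : E N → ℝ) (hu : VT N T u) :
    Tendsto (fun x => ‖gradient u x‖) (cocompact (E N)) (nhds 0) ∧
      ∀ x : E N,
        ‖gradient u x‖ ^ 2 ≤
            4 * Real.pi / Real.exp 1 *
              ((4 * Real.pi * T) ^ (-((N : ℝ) + 2) / 2)) * u x ∧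
        4 * Real.pi / Real.exp 1 * ((4 * Real.pi * T) ^ (-((N : ℝ) + 2) / 2)) * u x ≤
          4 * Real.pi / Real.exp 1 * ((4 * Real.pi * T) ^ (-(N : ℝ) - 1)) := by
  obtain ⟨hC2, hui, hpos, hmass, hess⟩ := hu
  simpa [hmass] using statement_3_general hT ⟨hC2, hpos, hess⟩ hui
end
end

section
/- For every N ≥ 1 there is a constant C₁ = C₁(N) > 0 such that for every T > 0 and every u ∈ VT₁⁺(T), the pointwise operator norm |∇²u| of the Hessian of u is Lebesgue integrable on ℝ^N and ∫_{ℝ^N} |∇²u| dL^N ≤ C₁ T^{-1}. -/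
open MeasureTheory Filter Metric
open scoped ENNReal NNReal Topology

noncomputable section

/-!
Put `g = u / (2T)`. Since `u · D²(log u) = D²u - Du ⊗ Du / u`, the hypothesis on `log u` makes the
symmetric form `A = D²u + g ⟨·, ·⟩` positive semidefinite. Hence its norm is at most its trace,
and `|D²u| ≤ tr A + g` pointwise. For a unit vector `e`, integrating `D²u(e, e)` by parts twice
against a cutoff at scale `r` moves the derivatives onto the cutoff, which costs `O(r⁻²) ∫ |u|`; as
`A(e, e) ≥ 0`, letting `r → ∞` shows that `A(e, e)` is integrable with `∫ A(e, e) ≤ ∫ g`. Summing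
over an orthonormal basis gives `∫ |D²u| ≤ (N + 1) ∫ g = (N + 1) / (2T)`.
-/

-- Instances for the norm on `V →L[ℝ] V →L[ℝ] ℝ` are not found at the default depth.
set_option maxSynthPendingDepth 3

lemma abs_apply_le_sqrt_mul_sqrt {V : Type*} [SeminormedAddCommGroup V] [NormedSpace ℝ V]
    {B : V →L[ℝ] V →L[ℝ] ℝ} (hsymm : ∀ v w, B v w = B w v) (hpos : ∀ v, 0 ≤ B v v) (v w : V) :
    |B v w| ≤ √(B v v) * √(B w w) := by
  rw [← Real.sqrt_mul (hpos v)]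
  exact Real.abs_le_sqrt (B.toBilinForm.apply_sq_le_of_symm hpos ⟨hsymm⟩ v w)

section SymmetricForms

variable {V : Type*} [NormedAddCommGroup V] [InnerProductSpace ℝ V] {ι : Type*} [Fintype ι]
  {B : V →L[ℝ] V →L[ℝ] ℝ}

lemma sum_abs_inner_mul_sqrt_le (b : OrthonormalBasis ι ℝ V) {d : ι → ℝ}
    (hd : ∀ i, 0 ≤ d i) (v : V) :
    ∑ i, |inner ℝ (b i) v| * √(d i) ≤ ‖v‖ * √(∑ i, d i) := by
  calc ∑ i, |inner ℝ (b i) v| * √(d i)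
      ≤ √(∑ i, |inner ℝ (b i) v| ^ 2) * √(∑ i, √(d i) ^ 2) :=
        Real.sum_mul_le_sqrt_mul_sqrt _ _ _
    _ = ‖v‖ * √(∑ i, d i) := by
        simp only [sq_abs, b.sum_sq_inner_right, Real.sqrt_sq (norm_nonneg v), Real.sq_sqrt (hd _)]

lemma norm_le_sum_apply_self (hsymm : ∀ v w, B v w = B w v) (hpos : ∀ v, 0 ≤ B v v)
    (b : OrthonormalBasis ι ℝ V) : ‖B‖ ≤ ∑ i, B (b i) (b i) := by
  have htrace : 0 ≤ ∑ i, B (b i) (b i) := Finset.sum_nonneg fun i _ => hpos (b i)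
  refine B.opNorm_le_bound₂ htrace fun v w => ?_
  have hexpand : B v w = ∑ i, ∑ j, inner ℝ (b i) v * inner ℝ (b j) w * B (b i) (b j) := by
    conv_lhs => rw [← b.sum_repr' v, ← b.sum_repr' w]
    simp only [map_sum, map_smul, sum_apply, smul_apply, smul_eq_mul, Finset.mul_sum]
    rw [Finset.sum_comm]
    exact Finset.sum_congr rfl fun i _ => Finset.sum_congr rfl fun j _ => by ring
  calc ‖B v w‖
      ≤ ∑ i, ∑ j, |inner ℝ (b i) v| * |inner ℝ (b j) w| * |B (b i) (b j)| := by
        rw [hexpand]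
        refine (norm_sum_le _ _).trans (Finset.sum_le_sum fun i _ => (norm_sum_le _ _).trans_eq ?_)
        simp only [norm_mul, Real.norm_eq_abs]
    _ ≤ ∑ i, ∑ j, |inner ℝ (b i) v| * |inner ℝ (b j) w| *
          (√(B (b i) (b i)) * √(B (b j) (b j))) := by
        gcongr
        exact abs_apply_le_sqrt_mul_sqrt hsymm hpos _ _
    _ = (∑ i, |inner ℝ (b i) v| * √(B (b i) (b i))) *
          ∑ j, |inner ℝ (b j) w| * √(B (b j) (b j)) := by
        simp only [Finset.sum_mul_sum, mul_mul_mul_comm]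
    _ ≤ (‖v‖ * √(∑ i, B (b i) (b i))) * (‖w‖ * √(∑ i, B (b i) (b i))) := by
        gcongr <;> exact sum_abs_inner_mul_sqrt_le b (fun i => hpos (b i)) _
    _ = (∑ i, B (b i) (b i)) * ‖v‖ * ‖w‖ := by
        rw [mul_mul_mul_comm, Real.mul_self_sqrt htrace]
        ring

lemma norm_le_sum_apply_self_add_add {a : ℝ} (hsymm : ∀ v w, B v w = B w v) (ha : 0 ≤ a)
    (hpos : ∀ v, 0 ≤ B v v + a * ‖v‖ ^ 2) (b : OrthonormalBasis ι ℝ V) :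
    ‖B‖ ≤ ∑ i, (B (b i) (b i) + a) + a := by
  let I : V →L[ℝ] V →L[ℝ] ℝ := innerSL ℝ
  let A : V →L[ℝ] V →L[ℝ] ℝ := B + a • I
  have hA_apply (v w : V) : A v w = B v w + a * inner ℝ v w := rfl
  have hA_self (v : V) : A v v = B v v + a * ‖v‖ ^ 2 := by
    rw [hA_apply, real_inner_self_eq_norm_sq]
  calc ‖B‖ = ‖A - a • I‖ := by rw [show A = B + a • I from rfl, add_sub_cancel_right]
    _ ≤ ‖A‖ + ‖a • I‖ := norm_sub_le _ _
    _ ≤ ∑ i, A (b i) (b i) + a := by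
        gcongr
        · refine norm_le_sum_apply_self (fun v w => ?_) (fun v => ?_) b
          · rw [hA_apply, hA_apply, hsymm, real_inner_comm]
          · exact hA_self v ▸ hpos v
        · rw [norm_smul, Real.norm_of_nonneg ha]
          exact mul_le_of_le_one_right ha (norm_innerSL_le ℝ)
    _ = ∑ i, (B (b i) (b i) + a) + a := by simp [hA_self]

end SymmetricForms

section SecondDerivatives

variable {V F : Type*} [NormedAddCommGroup V] [NormedSpace ℝ V]
  [NormedAddCommGroup F] [NormedSpace ℝ F]

lemma norm_iteratedFDeriv_two_eq_norm_fderiv_fderiv (f : V → F) (x : V) :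
    ‖iteratedFDeriv ℝ 2 f x‖ = ‖fderiv ℝ (fderiv ℝ f) x‖ := by
  rw [← norm_iteratedFDeriv_fderiv, norm_iteratedFDeriv_one]

lemma fderiv_fderiv_apply {f : V → F} {x : V} (hf : DifferentiableAt ℝ (fderiv ℝ f) x) (v w : V) :
    fderiv ℝ (fderiv ℝ f) x v w = fderiv ℝ (fun y => fderiv ℝ f y w) x v := by
  simp [fderiv_clm_apply hf (differentiableAt_const w)]

lemma continuous_fderiv_fderiv_apply {f : V → F} (hf : ContDiff ℝ 2 f) (v w : V) :
    Continuous fun x => fderiv ℝ (fderiv ℝ f) x v w :=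
  (((hf.fderiv_right (m := 1) le_rfl).continuous_fderiv one_ne_zero).clm_apply
    continuous_const).clm_apply continuous_const

lemma fderiv_fderiv_comp_smul (f : V → F) (c : ℝ) (x : V) :
    fderiv ℝ (fderiv ℝ fun y => f (c • y)) x = c ^ 2 • fderiv ℝ (fderiv ℝ f) (c • x) := by
  have hfirst : (fderiv ℝ fun y => f (c • y)) = c • fun y => fderiv ℝ f (c • y) :=
    funext fun y => fderiv_comp_smul c
  rw [hfirst, fderiv_const_smul_field, Pi.smul_apply, fderiv_comp_smul, smul_smul, sq]

lemma fderiv_fderiv_log {u : V → ℝ} {x : V} (hu : ContDiffAt ℝ 2 u x) (hne : u x ≠ 0) (v w : V) :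
    fderiv ℝ (fderiv ℝ fun y => Real.log (u y)) x v w =
      (u x)⁻¹ * fderiv ℝ (fderiv ℝ u) x v w -
        (u x ^ 2)⁻¹ * (fderiv ℝ u x v * fderiv ℝ u x w) := by
  have hdu : HasFDerivAt u (fderiv ℝ u x) x := (hu.differentiableAt two_ne_zero).hasFDerivAt
  have hddu : HasFDerivAt (fderiv ℝ u) (fderiv ℝ (fderiv ℝ u) x) x :=
    ((hu.fderiv_right (m := 1) le_rfl).differentiableAt one_ne_zero).hasFDerivAt
  have hinv : HasFDerivAt (fun y => (u y)⁻¹) (-(u x ^ 2)⁻¹ • fderiv ℝ u x) x :=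
    (hasDerivAt_inv hne).comp_hasFDerivAt x hdu
  have hfirst : (fderiv ℝ fun y => Real.log (u y)) =ᶠ[𝓝 x] fun y => (u y)⁻¹ • fderiv ℝ u y := by
    filter_upwards [hu.eventually (by simp), hu.continuousAt.eventually_ne hne] with y hy hy_ne
    exact fderiv.log (hy.differentiableAt two_ne_zero) hy_ne
  rw [hfirst.fderiv_eq, (hinv.fun_smul hddu).fderiv]
  simp only [neg_smul, add_apply, smul_apply, ContinuousLinearMap.smulRight_apply, neg_apply,
    smul_eq_mul]
  ring

lemma fderiv_fderiv_add_nonneg_of_log {u : V → ℝ} {T : ℝ} {x v : V} (hT : 0 < T)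
    (hu : ContDiffAt ℝ 2 u x) (hpos : 0 < u x)
    (hlog : 0 ≤ 2 * T * fderiv ℝ (fderiv ℝ fun y => Real.log (u y)) x v v + ‖v‖ ^ 2) :
    0 ≤ fderiv ℝ (fderiv ℝ u) x v v + u x / (2 * T) * ‖v‖ ^ 2 := by
  rw [fderiv_fderiv_log hu hpos.ne'] at hlog
  have hsplit : fderiv ℝ (fderiv ℝ u) x v v + u x / (2 * T) * ‖v‖ ^ 2 =
      u x / (2 * T) * (2 * T * ((u x)⁻¹ * fderiv ℝ (fderiv ℝ u) x v v -
        (u x ^ 2)⁻¹ * (fderiv ℝ u x v * fderiv ℝ u x v)) + ‖v‖ ^ 2) +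
      (u x)⁻¹ * fderiv ℝ u x v ^ 2 := by
    field_simp
    ring
  rw [hsplit]
  positivity

end SecondDerivatives

lemma setIntegral_le_integral_mul {α : Type*} [MeasurableSpace α] {μ : Measure α} {s : Set α}
    {φ G : α → ℝ} (hs : MeasurableSet s) (hG : ∀ x, 0 ≤ G x) (hφ : ∀ x, 0 ≤ φ x)
    (hφ_one : ∀ x ∈ s, φ x = 1) (hint : Integrable (fun x => φ x * G x) μ) :
    ∫ x in s, G x ∂μ ≤ ∫ x, φ x * G x ∂μ := by
  calc ∫ x in s, G x ∂μ = ∫ x in s, φ x * G x ∂μ :=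
        setIntegral_congr_fun hs fun x hx => by simp only [hφ_one x hx, one_mul]
    _ ≤ ∫ x, φ x * G x ∂μ :=
        setIntegral_le_integral hint (ae_of_all _ fun x => mul_nonneg (hφ x) (hG x))

section Integration

variable {V : Type*} [NormedAddCommGroup V] [NormedSpace ℝ V] [FiniteDimensional ℝ V]

lemma exists_cutoff_norm_fderiv_fderiv_le :
    ∃ M : ℝ, ∀ r > 0, ∃ φ : V → ℝ, ContDiff ℝ 2 φ ∧ HasCompactSupport φ ∧
      (∀ x, φ x ∈ Set.Icc 0 1) ∧ (∀ x ∈ closedBall 0 r, φ x = 1) ∧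
      ∀ x, ‖fderiv ℝ (fderiv ℝ φ) x‖ ≤ M / r ^ 2 := by
  obtain ⟨ψ, hψ_one⟩ : ∃ ψ : ContDiffBump (0 : V), ψ.rIn = 1 :=
    ⟨⟨1, 2, one_pos, one_lt_two⟩, rfl⟩
  have hψ : ContDiff ℝ 2 ψ := ψ.contDiff
  obtain ⟨M, hM⟩ := ((ψ.hasCompactSupport.fderiv ℝ).fderiv ℝ).exists_bound_of_continuous
    ((hψ.fderiv_right (m := 1) le_rfl).continuous_fderiv one_ne_zero)
  refine ⟨M, fun r hr => ⟨fun x => ψ (r⁻¹ • x), hψ.comp (contDiff_const_smul _),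
    ψ.hasCompactSupport.comp_smul (inv_ne_zero hr.ne'), fun x => ⟨ψ.nonneg, ψ.le_one⟩,
    fun x hx => ψ.one_of_mem_closedBall ?_, fun x => ?_⟩⟩
  · rw [mem_closedBall_zero_iff] at hx
    rw [hψ_one, mem_closedBall_zero_iff, norm_smul, norm_inv, Real.norm_of_nonneg hr.le]
    exact inv_mul_le_one_of_le₀ hx hr.le
  · rw [fderiv_fderiv_comp_smul, norm_smul, norm_pow, norm_inv, Real.norm_of_nonneg hr.le, inv_pow,
      div_eq_inv_mul]
    gcongr
    exact hM _

variable [MeasurableSpace V] [BorelSpace V] {μ : Measure V} [μ.IsAddHaarMeasure]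

lemma integral_mul_fderiv_of_hasCompactSupport {f g : V → ℝ} (hf : ContDiff ℝ 1 f)
    (hg : ContDiff ℝ 1 g) (hfs : HasCompactSupport f) (v : V) :
    ∫ x, f x * fderiv ℝ g x v ∂μ = -∫ x, fderiv ℝ f x v * g x ∂μ := by
  have hdf : Continuous fun x => fderiv ℝ f x v :=
    (hf.continuous_fderiv one_ne_zero).clm_apply continuous_const
  have hdg : Continuous fun x => fderiv ℝ g x v :=
    (hg.continuous_fderiv one_ne_zero).clm_apply continuous_const
  exact integral_mul_fderiv_eq_neg_fderiv_mul_of_integrable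
    ((hdf.mul hg.continuous).integrable_of_hasCompactSupport (hfs.fderiv_apply ℝ v).mul_right)
    ((hf.continuous.mul hdg).integrable_of_hasCompactSupport hfs.mul_right)
    ((hf.continuous.mul hg.continuous).integrable_of_hasCompactSupport hfs.mul_right)
    (fun x _ => hf.differentiable one_ne_zero x) (fun x _ => hg.differentiable one_ne_zero x)

lemma integral_mul_fderiv_fderiv_of_hasCompactSupport {f g : V → ℝ} (hf : ContDiff ℝ 2 f)
    (hg : ContDiff ℝ 2 g) (hfs : HasCompactSupport f) (v w : V) :
    ∫ x, f x * fderiv ℝ (fderiv ℝ g) x v w ∂μ =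
      ∫ x, fderiv ℝ (fderiv ℝ f) x w v * g x ∂μ := by
  have hdf : ContDiff ℝ 1 fun x => fderiv ℝ f x v :=
    (hf.fderiv_right le_rfl).clm_apply contDiff_const
  have hdg : ContDiff ℝ 1 fun x => fderiv ℝ g x w :=
    (hg.fderiv_right le_rfl).clm_apply contDiff_const
  have hddf : Differentiable ℝ (fderiv ℝ f) :=
    (hf.fderiv_right (m := 1) le_rfl).differentiable one_ne_zero
  have hddg : Differentiable ℝ (fderiv ℝ g) :=
    (hg.fderiv_right (m := 1) le_rfl).differentiable one_ne_zero
  simp only [fderiv_fderiv_apply (hddf _), fderiv_fderiv_apply (hddg _)]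
  rw [integral_mul_fderiv_of_hasCompactSupport (hf.of_le one_le_two) hdg hfs,
    integral_mul_fderiv_of_hasCompactSupport hdf (hg.of_le one_le_two) (hfs.fderiv_apply ℝ v),
    neg_neg]

lemma integral_mul_fderiv_fderiv_le {f u : V → ℝ} {K : ℝ} (hf : ContDiff ℝ 2 f)
    (hfs : HasCompactSupport f) (hK : ∀ x, ‖fderiv ℝ (fderiv ℝ f) x‖ ≤ K) (hu : ContDiff ℝ 2 u)
    (hui : Integrable u μ) (v w : V) :
    ∫ x, f x * fderiv ℝ (fderiv ℝ u) x v w ∂μ ≤ K * ‖v‖ * ‖w‖ * ∫ x, |u x| ∂μ := by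
  rw [integral_mul_fderiv_fderiv_of_hasCompactSupport hf hu hfs, ← integral_const_mul]
  refine (Real.le_norm_self _).trans
    (norm_integral_le_of_norm_le (hui.abs.const_mul _) (ae_of_all _ fun x => ?_))
  rw [norm_mul, Real.norm_eq_abs (u x)]
  gcongr
  calc ‖fderiv ℝ (fderiv ℝ f) x w v‖ ≤ ‖fderiv ℝ (fderiv ℝ f) x‖ * ‖w‖ * ‖v‖ :=
        ContinuousLinearMap.le_opNorm₂ _ _ _
    _ ≤ K * ‖w‖ * ‖v‖ := by gcongr; exact hK x
    _ = K * ‖v‖ * ‖w‖ := mul_right_comm _ _ _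

variable {u g : V → ℝ} {v : V}

lemma exists_setIntegral_closedBall_fderiv_fderiv_add_le (hu : ContDiff ℝ 2 u)
    (hui : Integrable u μ) (hg : Integrable g μ) (hg_nonneg : ∀ x, 0 ≤ g x)
    (hpos : ∀ x, 0 ≤ fderiv ℝ (fderiv ℝ u) x v v + g x) :
    ∃ C : ℝ, ∀ r > 0, ∫ x in closedBall 0 r, (fderiv ℝ (fderiv ℝ u) x v v + g x) ∂μ ≤
      C / r ^ 2 + ∫ x, g x ∂μ := by
  obtain ⟨M, hM⟩ := exists_cutoff_norm_fderiv_fderiv_le (V := V)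
  refine ⟨M * ‖v‖ * ‖v‖ * ∫ x, |u x| ∂μ, fun r hr => ?_⟩
  obtain ⟨φ, hφ, hφs, hφ_mem, hφ_one, hφ_le⟩ := hM r hr
  have hint_u : Integrable (fun x => φ x * fderiv ℝ (fderiv ℝ u) x v v) μ :=
    (hφ.continuous.mul (continuous_fderiv_fderiv_apply hu v v)).integrable_of_hasCompactSupport
      hφs.mul_right
  have hint_g : Integrable (fun x => φ x * g x) μ :=
    hg.bdd_mul hφ.continuous.aestronglyMeasurable (c := 1) (ae_of_all _ fun x => by
      rw [Real.norm_of_nonneg (hφ_mem x).1]; exact (hφ_mem x).2)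
  calc ∫ x in closedBall 0 r, (fderiv ℝ (fderiv ℝ u) x v v + g x) ∂μ
      ≤ ∫ x, φ x * (fderiv ℝ (fderiv ℝ u) x v v + g x) ∂μ :=
        setIntegral_le_integral_mul measurableSet_closedBall hpos (fun x => (hφ_mem x).1) hφ_one
          (by simp only [mul_add]; exact hint_u.add hint_g)
    _ = ∫ x, φ x * fderiv ℝ (fderiv ℝ u) x v v ∂μ + ∫ x, φ x * g x ∂μ := by
        simp only [mul_add, integral_add hint_u hint_g]
    _ ≤ M / r ^ 2 * ‖v‖ * ‖v‖ * ∫ x, |u x| ∂μ + ∫ x, g x ∂μ := by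
        refine add_le_add (integral_mul_fderiv_fderiv_le hφ hφs hφ_le hu hui v v)
          (integral_mono hint_g hg fun x => ?_)
        exact mul_le_of_le_one_left (hg_nonneg x) (hφ_mem x).2
    _ = (M * ‖v‖ * ‖v‖ * ∫ x, |u x| ∂μ) / r ^ 2 + ∫ x, g x ∂μ := by ring

theorem integrable_fderiv_fderiv_add_and_integral_le (hu : ContDiff ℝ 2 u)
    (hui : Integrable u μ) (hg : Integrable g μ) (hg_nonneg : ∀ x, 0 ≤ g x)
    (hpos : ∀ x, 0 ≤ fderiv ℝ (fderiv ℝ u) x v v + g x) :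
    Integrable (fun x => fderiv ℝ (fderiv ℝ u) x v v + g x) μ ∧
      ∫ x, (fderiv ℝ (fderiv ℝ u) x v v + g x) ∂μ ≤ ∫ x, g x ∂μ := by
  obtain ⟨C, hC⟩ :=
    exists_setIntegral_closedBall_fderiv_fderiv_add_le hu hui hg hg_nonneg hpos
  have hcover : AECover μ atTop fun r : ℝ => closedBall (0 : V) r := aecover_closedBall tendsto_id
  have hbound : Tendsto (fun r : ℝ => C / r ^ 2 + ∫ x, g x ∂μ) atTop (𝓝 (∫ x, g x ∂μ)) := by
    simpa using ((tendsto_pow_atTop two_ne_zero).const_div_atTop C).add_const (∫ x, g x ∂μ)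
  have hle : ∀ᶠ r in atTop, ∫ x in closedBall 0 r, (fderiv ℝ (fderiv ℝ u) x v v + g x) ∂μ ≤
      C / r ^ 2 + ∫ x, g x ∂μ := (eventually_gt_atTop 0).mono hC
  have hint : Integrable (fun x => fderiv ℝ (fderiv ℝ u) x v v + g x) μ := by
    refine hcover.integrable_of_integral_bounded_of_nonneg_ae (∫ x, g x ∂μ + 1) (fun r => ?_)
      (ae_of_all _ hpos) ?_
    · exact ((continuous_fderiv_fderiv_apply hu v v).continuousOn.integrableOn_compact
        (isCompact_closedBall 0 r)).add hg.integrableOn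
    · filter_upwards [hle, hbound.eventually_le_const (lt_add_one _)] with r h₁ h₂ using h₁.trans h₂
  exact ⟨hint, le_of_tendsto_of_tendsto
    (hcover.integral_tendsto_of_countably_generated hint) hbound hle⟩

end Integration

section HessianBound

open Module (finrank)

variable {V : Type*} [NormedAddCommGroup V] [InnerProductSpace ℝ V] [FiniteDimensional ℝ V]
  [MeasurableSpace V] [BorelSpace V] {μ : Measure V} [μ.IsAddHaarMeasure] {u g : V → ℝ}

theorem integrable_norm_fderiv_fderiv_and_integral_le (hu : ContDiff ℝ 2 u) (hui : Integrable u μ)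
    (hg : Integrable g μ) (hg_nonneg : ∀ x, 0 ≤ g x)
    (hpos : ∀ x v, 0 ≤ fderiv ℝ (fderiv ℝ u) x v v + g x * ‖v‖ ^ 2) :
    Integrable (fun x => ‖fderiv ℝ (fderiv ℝ u) x‖) μ ∧
      ∫ x, ‖fderiv ℝ (fderiv ℝ u) x‖ ∂μ ≤ (finrank ℝ V + 1) * ∫ x, g x ∂μ := by
  let b := stdOrthonormalBasis ℝ V
  have hpos_basis (i) (x : V) : 0 ≤ fderiv ℝ (fderiv ℝ u) x (b i) (b i) + g x := by
    simpa using hpos x (b i)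
  have hbasis (i) :=
    integrable_fderiv_fderiv_add_and_integral_le hu hui hg hg_nonneg (hpos_basis i)
  have hnorm_le (x : V) : ‖fderiv ℝ (fderiv ℝ u) x‖ ≤
      ∑ i, (fderiv ℝ (fderiv ℝ u) x (b i) (b i) + g x) + g x :=
    norm_le_sum_apply_self_add_add (hu.contDiffAt.isSymmSndFDerivAt (by simp)) (hg_nonneg x)
      (hpos x) b
  have hint_sum : Integrable
      (fun x => ∑ i, (fderiv ℝ (fderiv ℝ u) x (b i) (b i) + g x)) μ :=
    integrable_finsetSum _ fun i _ => (hbasis i).1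
  have hcont : Continuous fun x => ‖fderiv ℝ (fderiv ℝ u) x‖ :=
    ((hu.fderiv_right (m := 1) le_rfl).continuous_fderiv one_ne_zero).norm
  have hint : Integrable (fun x => ‖fderiv ℝ (fderiv ℝ u) x‖) μ :=
    (hint_sum.add hg).mono' hcont.aestronglyMeasurable
      (ae_of_all _ fun x => (norm_norm _).trans_le (hnorm_le x))
  refine ⟨hint, ?_⟩
  calc ∫ x, ‖fderiv ℝ (fderiv ℝ u) x‖ ∂μ
      ≤ ∫ x, (∑ i, (fderiv ℝ (fderiv ℝ u) x (b i) (b i) + g x) + g x) ∂μ :=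
        integral_mono hint (hint_sum.add hg) hnorm_le
    _ = ∑ i, ∫ x, (fderiv ℝ (fderiv ℝ u) x (b i) (b i) + g x) ∂μ + ∫ x, g x ∂μ := by
        rw [integral_add hint_sum hg, integral_finsetSum _ fun i _ => (hbasis i).1]
    _ ≤ ∑ _i : Fin (finrank ℝ V), ∫ x, g x ∂μ + ∫ x, g x ∂μ :=
        add_le_add_left (Finset.sum_le_sum fun i _ => (hbasis i).2) _
    _ = (finrank ℝ V + 1) * ∫ x, g x ∂μ := by
        rw [Finset.sum_const, Finset.card_univ, Fintype.card_fin, nsmul_eq_mul, add_one_mul]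

theorem statement_4_general {T : ℝ} (hT : 0 < T) (hu : ContDiff ℝ 2 u) (hui : Integrable u μ)
    (hpos : ∀ x, 0 < u x)
    (hlog : ∀ x v : V,
      0 ≤ 2 * T * iteratedFDeriv ℝ 2 (fun y => Real.log (u y)) x ![v, v] + ‖v‖ ^ 2) :
    Integrable (fun x => ‖iteratedFDeriv ℝ 2 u x‖) μ ∧
      ∫ x, ‖iteratedFDeriv ℝ 2 u x‖ ∂μ ≤ (finrank ℝ V + 1) / 2 * T⁻¹ * ∫ x, u x ∂μ := by
  simp only [norm_iteratedFDeriv_two_eq_norm_fderiv_fderiv]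
  have hhess (x v : V) : 0 ≤ fderiv ℝ (fderiv ℝ u) x v v + u x / (2 * T) * ‖v‖ ^ 2 :=
    fderiv_fderiv_add_nonneg_of_log hT hu.contDiffAt (hpos x)
      (by simpa [iteratedFDeriv_two_apply] using hlog x v)
  obtain ⟨hint, hle⟩ := integrable_norm_fderiv_fderiv_and_integral_le hu hui
    (hui.div_const (2 * T)) (fun x => div_nonneg (hpos x).le (by positivity)) hhess
  refine ⟨hint, hle.trans_eq ?_⟩
  rw [integral_div]
  ring

end HessianBound

/-- there is `C₁ = C₁(N) > 0` so that for every `u ∈ 𝒱𝒯₁⁺(T)` the pointwise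
operator norm of the Hessian of `u` is integrable with `∫ |∇²u| ≤ C₁ T⁻¹`. -/
theorem statement_4 (N : ℕ) (hN : 1 ≤ N) :
    ∃ C₁ : ℝ, 0 < C₁ ∧
      ∀ T : ℝ, 0 < T → ∀ u : E N → ℝ, VT N T u →
        Integrable (fun x => ‖iteratedFDeriv ℝ 2 u x‖) volume ∧
        (∫ x, ‖iteratedFDeriv ℝ 2 u x‖) ≤ C₁ * T⁻¹ := by
  refine ⟨(N + 1) / 2, by positivity, fun T hT u ⟨hu, hui, hpos, hmass, hlog⟩ => ?_⟩
  simpa [hmass] using statement_4_general hT hu hui hpos hlog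
end
end

section
/- Let τ₀ > 0, u₀ ∈ VT₁⁺(τ₀), and let U(t,·) = H_t u₀ be the heat flow of u₀. Then for every t ≥ 0, U(t,·) ∈ VT₁⁺(τ₀ + t); in particular U(t,·) is positive, C², has unit mass, and satisfies 2(τ₀+t)·Hess(log U(t,·))(x)(v,v) + |v|² ≥ 0 for all x, v ∈ ℝ^N. -/
open MeasureTheory Filter Metric
open scoped ENNReal NNReal Topology

noncomputable section

/- For a positive `C²` function `u` the curvature condition `2τ Hess (log u) + |·|² ≥ 0` says that
`4τ log u + |x|²` is convex. In the heat integral of `u` over `y`, substitute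
`y = z + (τ / (τ + t)) • x` and multiply by `exp (|x|² / (4 (τ + t)))`. Completing the square shows
that the new integrand is log-convex in `x` for every fixed `z`, and by Hölder's inequality an
integral of log-convex functions is log-convex; this is the curvature condition for
`heatFlow N u t` at time `τ + t`.

Smoothness is read off on the Fourier side: the heat flow is the inverse Fourier transform of the
product of a Gaussian with the bounded function `𝓕 u`, and that product has moments of all
orders. -/

section Hessian

variable {V : Type*}

theorem convexOn_univ_iff_forall_line [AddCommGroup V] [Module ℝ V] {f : V → ℝ} :
    ConvexOn ℝ Set.univ f ↔ ∀ x v, ConvexOn ℝ Set.univ fun s : ℝ => f (x + s • v) := by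
  refine ⟨fun hf x v => ?_, fun hf => ⟨convex_univ, fun x _ y _ a b ha hb hab => ?_⟩⟩
  · simpa [Function.comp_def, AffineMap.lineMap_apply, add_comm] using
      hf.comp_affineMap (AffineMap.lineMap x (x + v))
  · have h := (hf x (y - x)).2 (Set.mem_univ 0) (Set.mem_univ 1) ha hb hab
    have hpt : x + b • (y - x) = a • x + b • y := by
      rw [← eq_sub_iff_add_eq] at hab
      rw [hab]
      module
    simpa [hpt] using h

theorem hasDerivAt_comp_line [NormedAddCommGroup V] [NormedSpace ℝ V] {F : Type*}
    [NormedAddCommGroup F] [NormedSpace ℝ F] {f : V → F} (hf : Differentiable ℝ f)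
    (x v : V) (s : ℝ) :
    HasDerivAt (fun s : ℝ => f (x + s • v)) (fderiv ℝ f (x + s • v) v) s := by
  have hline : HasDerivAt (fun s : ℝ => x + s • v) v s := by
    simpa using ((hasDerivAt_id s).smul_const v).const_add x
  exact (hf _).hasFDerivAt.comp_hasDerivAt s hline

theorem hasDerivAt_fderiv_comp_line [NormedAddCommGroup V] [NormedSpace ℝ V] {f : V → ℝ}
    (hf : ContDiff ℝ 2 f) (x v : V) (s : ℝ) :
    HasDerivAt (fun s : ℝ => fderiv ℝ f (x + s • v) v)
      (iteratedFDeriv ℝ 2 f (x + s • v) ![v, v]) s := by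
  have hf' : Differentiable ℝ (fderiv ℝ f) :=
    (hf.fderiv_right (m := 1) (by norm_num)).differentiable one_ne_zero
  simpa [iteratedFDeriv_two_apply] using
    (hasDerivAt_comp_line hf' x v s).clm_apply (hasDerivAt_const s v)

theorem convexOn_univ_iff_iteratedFDeriv_two_nonneg [NormedAddCommGroup V] [NormedSpace ℝ V]
    {f : V → ℝ} (hf : ContDiff ℝ 2 f) :
    ConvexOn ℝ Set.univ f ↔ ∀ x v, 0 ≤ iteratedFDeriv ℝ 2 f x ![v, v] := by
  have h1 := hasDerivAt_comp_line (hf.differentiable two_ne_zero)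
  have h2 := hasDerivAt_fderiv_comp_line hf
  have hderiv (x v : V) : deriv (fun s : ℝ => f (x + s • v)) =
      fun s => fderiv ℝ f (x + s • v) v := funext fun s => (h1 x v s).deriv
  rw [convexOn_univ_iff_forall_line]
  refine ⟨fun hconv x v => ?_, fun hHess x v => ?_⟩
  · have hmono : Monotone (fun s : ℝ => fderiv ℝ f (x + s • v) v) := by
      rw [← hderiv, ← monotoneOn_univ]
      exact (hconv x v).monotoneOn_deriv fun s _ => (h1 x v s).differentiableAt
    simpa [(h2 x v 0).deriv] using hmono.deriv_nonneg (x := 0)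
  · refine convexOn_univ_of_deriv2_nonneg (fun s => (h1 x v s).differentiableAt) ?_ fun s => ?_
    · exact hderiv x v ▸ fun s => (h2 x v s).differentiableAt
    · simpa [hderiv, (h2 x v s).deriv] using hHess (x + s • v) v

theorem iteratedFDeriv_two_norm_sq [NormedAddCommGroup V] [InnerProductSpace ℝ V] (x v : V) :
    iteratedFDeriv ℝ 2 (fun y : V => ‖y‖ ^ 2) x ![v, v] = 2 * ‖v‖ ^ 2 := by
  have hgrad : fderiv ℝ (fun y : V => ‖y‖ ^ 2) = ⇑(2 • innerSL ℝ (E := V)) := fderiv_norm_sq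
  rw [iteratedFDeriv_two_apply, hgrad, ContinuousLinearMap.fderiv]
  simp only [smul_apply, nsmul_eq_mul, Nat.cast_ofNat]
  exact congrArg (2 * ·) (real_inner_self_eq_norm_sq v)

theorem convexOn_const_mul_add_norm_sq_iff [NormedAddCommGroup V] [InnerProductSpace ℝ V]
    {f : V → ℝ} (hf : ContDiff ℝ 2 f) (T : ℝ) :
    ConvexOn ℝ Set.univ (fun x => 4 * T * f x + ‖x‖ ^ 2) ↔
      ∀ x v, 0 ≤ 2 * T * iteratedFDeriv ℝ 2 f x ![v, v] + ‖v‖ ^ 2 := by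
  have hTf : ContDiff ℝ 2 fun x => 4 * T * f x := contDiff_const.mul hf
  have hsq : ContDiff ℝ 2 fun x : V => ‖x‖ ^ 2 := contDiff_norm_sq ℝ
  have hHess (x v : V) : iteratedFDeriv ℝ 2 (fun x => 4 * T * f x + ‖x‖ ^ 2) x ![v, v] =
      2 * (2 * T * iteratedFDeriv ℝ 2 f x ![v, v] + ‖v‖ ^ 2) := by
    rw [fun_iteratedFDeriv_add_apply hTf.contDiffAt hsq.contDiffAt,
      add_apply, iteratedFDeriv_two_norm_sq]
    simp_rw [← smul_eq_mul (a := 4 * T)]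
    rw [iteratedFDeriv_const_smul_apply' hf.contDiffAt, smul_apply]
    simp only [smul_eq_mul]
    ring
  simp only [convexOn_univ_iff_iteratedFDeriv_two_nonneg (hTf.add hsq), hHess,
    mul_nonneg_iff_of_pos_left (two_pos : (0 : ℝ) < 2)]

end Hessian

section LogIntegralExp

variable {α : Type*} [MeasurableSpace α] {μ : Measure α}

theorem integral_exp_sub_log_integral_exp [NeZero μ] {g : α → ℝ}
    (hg : Integrable (fun a => Real.exp (g a)) μ) :
    ∫ a, Real.exp (g a - Real.log (∫ a, Real.exp (g a) ∂μ)) ∂μ = 1 := by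
  have hpos : 0 < ∫ a, Real.exp (g a) ∂μ := integral_exp_pos hg
  simp_rw [Real.exp_sub, Real.exp_log hpos]
  rw [integral_div, div_self hpos.ne']

/- Hölder's inequality in logarithmic form: after normalising both integrals to `1` it is the
integral of the pointwise convexity inequality of `exp`. -/
theorem log_integral_exp_le_of_le {g₁ g₂ g₃ : α → ℝ} {a b : ℝ} (ha : 0 ≤ a) (hb : 0 ≤ b)
    (hab : a + b = 1) (h₁ : Integrable (fun z => Real.exp (g₁ z)) μ)
    (h₂ : Integrable (fun z => Real.exp (g₂ z)) μ) (h₃ : Integrable (fun z => Real.exp (g₃ z)) μ)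
    (h : ∀ z, g₃ z ≤ a * g₁ z + b * g₂ z) :
    Real.log (∫ z, Real.exp (g₃ z) ∂μ) ≤
      a * Real.log (∫ z, Real.exp (g₁ z) ∂μ) + b * Real.log (∫ z, Real.exp (g₂ z) ∂μ) := by
  rcases eq_zero_or_neZero μ with rfl | _
  · simp
  set A := Real.log (∫ z, Real.exp (g₁ z) ∂μ)
  set B := Real.log (∫ z, Real.exp (g₂ z) ∂μ)
  have hpointwise (z : α) : Real.exp (g₃ z) ≤
      Real.exp (a * A + b * B) * (a * Real.exp (g₁ z - A) + b * Real.exp (g₂ z - B)) := by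
    calc Real.exp (g₃ z)
        ≤ Real.exp (a * A + b * B + (a * (g₁ z - A) + b * (g₂ z - B))) := by
          gcongr
          linarith [h z]
      _ = Real.exp (a * A + b * B) * Real.exp (a * (g₁ z - A) + b * (g₂ z - B)) :=
          Real.exp_add _ _
      _ ≤ _ := by
          gcongr
          exact convexOn_exp.2 (Set.mem_univ _) (Set.mem_univ _) ha hb hab
  have hA : Integrable (fun z => a * Real.exp (g₁ z - A)) μ := by
    simpa only [Real.exp_sub] using (h₁.div_const _).const_mul a
  have hB : Integrable (fun z => b * Real.exp (g₂ z - B)) μ := by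
    simpa only [Real.exp_sub] using (h₂.div_const _).const_mul b
  rw [Real.log_le_iff_le_exp (integral_exp_pos h₃)]
  calc ∫ z, Real.exp (g₃ z) ∂μ
      ≤ ∫ z, Real.exp (a * A + b * B) *
          (a * Real.exp (g₁ z - A) + b * Real.exp (g₂ z - B)) ∂μ :=
        integral_mono h₃ ((hA.add hB).const_mul _) hpointwise
    _ = Real.exp (a * A + b * B) := by
        rw [integral_const_mul, integral_add hA hB, integral_const_mul, integral_const_mul,
          integral_exp_sub_log_integral_exp h₁, integral_exp_sub_log_integral_exp h₂, mul_one,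
          mul_one, hab, mul_one]

theorem convexOn_log_integral_exp {V : Type*} [AddCommMonoid V] [Module ℝ V] {s : Set V}
    {g : V → α → ℝ} (hs : Convex ℝ s) (hg : ∀ z, ConvexOn ℝ s fun x => g x z)
    (hint : ∀ x ∈ s, Integrable (fun z => Real.exp (g x z)) μ) :
    ConvexOn ℝ s fun x => Real.log (∫ z, Real.exp (g x z) ∂μ) :=
  ⟨hs, fun _ hx _ hy _ _ ha hb hab => log_integral_exp_le_of_le ha hb hab (hint _ hx) (hint _ hy)
    (hint _ (hs hx hy ha hb hab)) fun z => (hg z).2 hx hy ha hb hab⟩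

end LogIntegralExp

section Semiconvexity

variable {V : Type*} [NormedAddCommGroup V] [InnerProductSpace ℝ V]

/- Completing the square: the weighted sum of the squared distances of `y` to `0` and to `x` is
minimal at `y = (τ / (τ + t)) • x`, and `z` is the deviation of `y` from this minimiser. -/
theorem div_mul_norm_sq_add_div_mul_norm_sub_sq {τ t : ℝ} (hτ : τ ≠ 0) (ht : t ≠ 0)
    (hτt : τ + t ≠ 0) (x z : V) :
    (τ + t) / τ * ‖z + (τ / (τ + t)) • x‖ ^ 2 +
        (τ + t) / t * ‖x - (z + (τ / (τ + t)) • x)‖ ^ 2 =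
      ‖x‖ ^ 2 + (τ + t) ^ 2 / (τ * t) * ‖z‖ ^ 2 := by
  have hsub : x - (z + (τ / (τ + t)) • x) = (t / (τ + t)) • x - z := by
    match_scalars <;> field_simp
    ring
  rw [hsub, norm_add_sq_real, norm_sub_sq_real, real_inner_smul_left, real_inner_smul_right,
    real_inner_comm, norm_smul, norm_smul, mul_pow, mul_pow, Real.norm_eq_abs, sq_abs,
    Real.norm_eq_abs, sq_abs]
  field_simp
  ring

theorem convexOn_comp_add_smul_sub_norm_sq {φ : V → ℝ} {τ t : ℝ} (hτ : 0 ≤ τ) (ht : 0 < t)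
    (hφ : ConvexOn ℝ Set.univ fun x => 4 * τ * φ x + ‖x‖ ^ 2) (z : V) :
    ConvexOn ℝ Set.univ fun x => 4 * (τ + t) * φ (z + (τ / (τ + t)) • x) -
      (τ + t) / t * ‖x - (z + (τ / (τ + t)) • x)‖ ^ 2 + ‖x‖ ^ 2 := by
  rcases hτ.eq_or_lt with rfl | hτ
  · have haffine : ConvexOn ℝ Set.univ
        fun x => (2 • innerSL ℝ z).toLinearMap x + (4 * t * φ z - ‖z‖ ^ 2) :=
      ((2 • innerSL ℝ z).toLinearMap.convexOn convex_univ).add_const _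
    refine haffine.congr fun x _ => ?_
    simp [norm_sub_sq_real, real_inner_comm, div_self ht.ne']
    ring
  · set y : V → V := fun x => z + (τ / (τ + t)) • x
    have hshift : ConvexOn ℝ Set.univ fun x => 4 * τ * φ (y x) + ‖y x‖ ^ 2 := by
      simpa [Function.comp_def, y, add_comm] using
        hφ.comp_affineMap ((τ / (τ + t)) • AffineMap.id ℝ V + AffineMap.const ℝ V z)
    refine ((hshift.smul (by positivity : 0 ≤ (τ + t) / τ)).add_const
      (-((τ + t) ^ 2 / (τ * t) * ‖z‖ ^ 2))).congr fun x _ => ?_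
    have hsquare := div_mul_norm_sq_add_div_mul_norm_sub_sq hτ.ne' ht.ne' (add_pos hτ ht).ne' x z
    have hcancel : (τ + t) / τ * (4 * τ * φ (y x)) = 4 * (τ + t) * φ (y x) := by field_simp
    simp only [Pi.add_apply, smul_eq_mul, mul_add, hcancel]
    linarith

theorem convexOn_log_integral_exp_sub_norm_sq [MeasurableSpace V] [MeasurableAdd V]
    {μ : Measure V} [NeZero μ] [μ.IsAddRightInvariant] {φ : V → ℝ} {τ t : ℝ} (hτ : 0 ≤ τ)
    (ht : 0 < t) (hφ : ConvexOn ℝ Set.univ fun x => 4 * τ * φ x + ‖x‖ ^ 2)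
    (hint : ∀ x, Integrable (fun y => Real.exp (φ y - ‖x - y‖ ^ 2 / (4 * t))) μ) :
    ConvexOn ℝ Set.univ fun x => 4 * (τ + t) *
      Real.log (∫ y, Real.exp (φ y - ‖x - y‖ ^ 2 / (4 * t)) ∂μ) + ‖x‖ ^ 2 := by
  set b := τ / (τ + t)
  let g (x z : V) : ℝ := φ (z + b • x) - ‖x - (z + b • x)‖ ^ 2 / (4 * t)
  let c (x : V) : ℝ := ‖x‖ ^ 2 / (4 * (τ + t))
  have : 0 < τ + t := by positivity
  have hconv (z : V) : ConvexOn ℝ Set.univ fun x => g x z + c x := by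
    refine ((convexOn_comp_add_smul_sub_norm_sq hτ ht hφ z).smul
      (by positivity : 0 ≤ (4 * (τ + t))⁻¹)).congr fun x _ => ?_
    simp only [g, c, b, smul_eq_mul]
    field_simp
  have hint_shift (x : V) : Integrable (fun z => Real.exp (g x z)) μ :=
    (hint x).comp_add_right (b • x)
  have hlog (x : V) : Real.log (∫ z, Real.exp (g x z + c x) ∂μ) =
      Real.log (∫ y, Real.exp (φ y - ‖x - y‖ ^ 2 / (4 * t)) ∂μ) + c x := by
    simp_rw [Real.exp_add]
    rw [integral_mul_const, Real.log_mul (integral_exp_pos (hint_shift x)).ne'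
      (Real.exp_pos _).ne', Real.log_exp, integral_add_right_eq_self
      (fun y => Real.exp (φ y - ‖x - y‖ ^ 2 / (4 * t))) (b • x)]
  have hlogconv := convexOn_log_integral_exp (μ := μ) convex_univ hconv fun x _ => by
    simpa only [Real.exp_add] using (hint_shift x).mul_const _
  refine (hlogconv.smul (by positivity : 0 ≤ 4 * (τ + t))).congr fun x _ => ?_
  simp only [hlog, c, smul_eq_mul]
  field_simp

end Semiconvexity

section Smoothness

open scoped FourierTransform

variable {V : Type*} [NormedAddCommGroup V] [InnerProductSpace ℝ V] [FiniteDimensional ℝ V]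
  [MeasurableSpace V] [BorelSpace V]

theorem integrable_exp_neg_mul_norm_sq {b : ℝ} (hb : 0 < b) :
    Integrable fun v : V => Real.exp (-b * ‖v‖ ^ 2) := by
  simpa [Complex.norm_exp, ← Complex.ofReal_pow] using
    (GaussianFourier.integrable_cexp_neg_mul_sq_norm_add (b := (b : ℂ)) (by simpa) 0 (0 : V)).norm

theorem integrable_norm_pow_mul_exp_neg_mul_norm_sq {b : ℝ} (hb : 0 < b) (n : ℕ) :
    Integrable fun v : V => ‖v‖ ^ n * Real.exp (-b * ‖v‖ ^ 2) := by
  refine ((integrable_exp_neg_mul_norm_sq (V := V) (half_pos hb)).const_mul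
    (n.factorial * Real.exp (1 / (2 * b)))).mono' (by fun_prop) (.of_forall fun v => ?_)
  have hpow : ‖v‖ ^ n ≤ n.factorial * Real.exp ‖v‖ :=
    (div_le_iff₀' (by positivity)).mp (Real.pow_div_factorial_le_exp _ (norm_nonneg v) n)
  have hyoung : ‖v‖ ≤ 1 / (2 * b) + b / 2 * ‖v‖ ^ 2 := by
    have hsq : 1 / (2 * b) + b / 2 * ‖v‖ ^ 2 - ‖v‖ = (b * ‖v‖ - 1) ^ 2 / (2 * b) := by
      field_simp
      ring
    have : 0 ≤ (b * ‖v‖ - 1) ^ 2 / (2 * b) := by positivity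
    linarith
  rw [Real.norm_of_nonneg (by positivity)]
  calc ‖v‖ ^ n * Real.exp (-b * ‖v‖ ^ 2)
      ≤ n.factorial * Real.exp ‖v‖ * Real.exp (-b * ‖v‖ ^ 2) := by gcongr
    _ ≤ n.factorial * Real.exp (1 / (2 * b) + b / 2 * ‖v‖ ^ 2) * Real.exp (-b * ‖v‖ ^ 2) := by
        gcongr
    _ = n.factorial * Real.exp (1 / (2 * b)) * Real.exp (-(b / 2) * ‖v‖ ^ 2) := by
        rw [mul_assoc, mul_assoc, ← Real.exp_add, ← Real.exp_add]
        ring_nf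

variable {F : Type*} [NormedAddCommGroup F] [NormedSpace ℂ F]

theorem contDiff_fourierInv_gaussian_smul_fourier {f : V → F} (hf : Integrable f) {b : ℝ}
    (hb : 0 < b) {n : ℕ∞} :
    ContDiff ℝ n (𝓕⁻ fun v => Complex.exp (-b * ‖v‖ ^ 2) • 𝓕 f v) := by
  have hcont : Continuous (𝓕 f) :=
    VectorFourier.fourierIntegral_continuous Real.continuous_fourierChar continuous_inner hf
  have hbound (v : V) : ‖𝓕 f v‖ ≤ ∫ y, ‖f y‖ :=
    VectorFourier.norm_fourierIntegral_le_integral_norm _ _ (innerₗ V) _ _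
  have hnorm (v : V) : ‖Complex.exp (-b * ‖v‖ ^ 2)‖ = Real.exp (-b * ‖v‖ ^ 2) := by
    simp [Complex.norm_exp, ← Complex.ofReal_pow]
  have hcontDiff : ContDiff ℝ n (𝓕 fun v => Complex.exp (-b * ‖v‖ ^ 2) • 𝓕 f v) := by
    refine Real.contDiff_fourier fun k _ => ?_
    refine ((integrable_norm_pow_mul_exp_neg_mul_norm_sq (V := V) hb k).mul_const
      (∫ y, ‖f y‖)).mono' (by fun_prop) (.of_forall fun v => ?_)
    rw [norm_smul, hnorm, Real.norm_of_nonneg (by positivity), mul_assoc]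
    gcongr
    exact hbound v
  have hneg : (𝓕⁻ fun v => Complex.exp (-b * ‖v‖ ^ 2) • 𝓕 f v) =
      fun x => 𝓕 (fun v => Complex.exp (-b * ‖v‖ ^ 2) • 𝓕 f v) (-x) :=
    funext fun x => Real.fourierInv_eq_fourier_neg _ x
  exact hneg ▸ hcontDiff.comp contDiff_neg

theorem integral_gaussian_smul_eq_fourierInv [CompleteSpace F] {f : V → F} (hf : Integrable f)
    {b : ℝ} (hb : 0 < b) (x : V) :
    ∫ y, ((Real.pi / b : ℂ) ^ (Module.finrank ℝ V / 2 : ℂ) *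
        Complex.exp (-Real.pi ^ 2 * ‖x - y‖ ^ 2 / b)) • f y =
      𝓕⁻ (fun v => Complex.exp (-b * ‖v‖ ^ 2) • 𝓕 f v) x := by
  let K (v : V) : ℂ := Complex.exp (-b * ‖v‖ ^ 2 + 2 * Real.pi * Complex.I * inner ℝ x v)
  have hb' : 0 < (b : ℂ).re := hb
  have hK : Integrable K := GaussianFourier.integrable_cexp_neg_mul_sq_norm_add hb' _ x
  calc ∫ y, ((Real.pi / b : ℂ) ^ (Module.finrank ℝ V / 2 : ℂ) *
        Complex.exp (-Real.pi ^ 2 * ‖x - y‖ ^ 2 / b)) • f y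
      = ∫ y, 𝓕 K y • f y := by
        simp only [K, fourier_gaussian_innerProductSpace' hb' x]
    _ = ∫ v, K v • 𝓕 f v := by
        simpa using! VectorFourier.integral_fourierIntegral_smul_eq_flip (L := innerₗ V)
          Real.continuous_fourierChar continuous_inner hK hf
    _ = 𝓕⁻ (fun v => Complex.exp (-b * ‖v‖ ^ 2) • 𝓕 f v) x := by
        rw [Real.fourierInv_eq']
        refine integral_congr_ae (.of_forall fun v => ?_)
        simp only [K, smul_smul, ← Complex.exp_add, real_inner_comm x]
        congr 2
        push_cast
        ring

theorem contDiff_integral_mul_exp_neg_norm_sq {u : V → ℝ} (hu : Integrable u) {t : ℝ}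
    (ht : 0 < t) {n : ℕ∞} :
    ContDiff ℝ n fun x => ∫ y, u y * Real.exp (-‖x - y‖ ^ 2 / (4 * t)) := by
  set b : ℝ := 4 * Real.pi ^ 2 * t with hbdef
  have hb : 0 < b := by positivity
  set C : ℂ := (Real.pi / b : ℂ) ^ (Module.finrank ℝ V / 2 : ℂ) with hCdef
  have hC : C ≠ 0 := by simp [C, Complex.cpow_eq_zero_iff, hb.ne', Real.pi_ne_zero]
  have hre (x : V) : ∫ y, u y * Real.exp (-‖x - y‖ ^ 2 / (4 * t)) =
      (C⁻¹ * 𝓕⁻ (fun v : V => Complex.exp (-b * ‖v‖ ^ 2) • 𝓕 (fun y => (u y : ℂ)) v) x).re := by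
    rw [← integral_gaussian_smul_eq_fourierInv (f := fun y => (u y : ℂ)) hu.ofReal hb,
      ← integral_const_mul, ← hCdef]
    have hintegrand (y : V) :
        C⁻¹ * ((C * Complex.exp (-Real.pi ^ 2 * ‖x - y‖ ^ 2 / b)) • (u y : ℂ)) =
          ((u y * Real.exp (-‖x - y‖ ^ 2 / (4 * t)) : ℝ) : ℂ) := by
      rw [smul_eq_mul, mul_assoc, inv_mul_cancel_left₀ hC]
      push_cast
      rw [mul_comm, hbdef]
      congr 2
      push_cast
      field_simp
    simp_rw [hintegrand, integral_complex_ofReal, Complex.ofReal_re]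
  simp_rw [hre]
  exact Complex.reCLM.contDiff.comp
    (contDiff_const.mul (contDiff_fourierInv_gaussian_smul_fourier hu.ofReal hb))

end Smoothness

section HeatFlow

variable {N : ℕ} {u : E N → ℝ} {t : ℝ}

theorem heatFlow_zero : heatFlow N u 0 = u := by
  funext x
  simp [heatFlow]

theorem heatFlow_of_ne_zero (ht : t ≠ 0) (x : E N) :
    heatFlow N u t x = (4 * Real.pi * t) ^ (-(N : ℝ) / 2) *
      ∫ y, u y * Real.exp (-‖x - y‖ ^ 2 / (4 * t)) := by
  rw [heatFlow, if_neg ht, ← integral_const_mul]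
  simp only [heatKernel, mul_left_comm]

theorem heatFlow_eq_convolution (ht : t ≠ 0) :
    heatFlow N u t = convolution u (heatKernel N t · 0) (ContinuousLinearMap.mul ℝ ℝ) volume := by
  funext x
  simp [heatFlow, ht, convolution, heatKernel]

theorem integral_heatKernel (ht : 0 < t) : ∫ x, heatKernel N t x 0 = 1 := by
  have hgauss (x : E N) : -‖x - 0‖ ^ 2 / (4 * t) = -(1 / (4 * t)) * ‖x‖ ^ 2 := by
    rw [sub_zero]
    ring
  simp only [heatKernel, hgauss]
  rw [integral_const_mul, GaussianFourier.integral_rexp_neg_mul_sq_norm (by positivity),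
    finrank_euclideanSpace_fin, div_div_eq_mul_div, div_one, ← mul_assoc, mul_comm Real.pi 4,
    ← Real.rpow_add (by positivity), neg_div, neg_add_cancel, Real.rpow_zero]

theorem integrable_heatKernel (ht : 0 < t) : Integrable (heatKernel N t · 0) :=
  .of_integral_ne_zero (by simp [integral_heatKernel ht])

theorem integrable_heatFlow (hu : Integrable u) (ht : 0 ≤ t) : Integrable (heatFlow N u t) := by
  rcases ht.eq_or_lt with rfl | ht
  · rwa [heatFlow_zero]
  · rw [heatFlow_eq_convolution ht.ne']
    exact hu.integrable_convolution _ (integrable_heatKernel ht)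

theorem integral_heatFlow (hu : Integrable u) (ht : 0 ≤ t) :
    ∫ x, heatFlow N u t x = ∫ x, u x := by
  rcases ht.eq_or_lt with rfl | ht
  · rw [heatFlow_zero]
  · rw [heatFlow_eq_convolution ht.ne',
      integral_convolution _ hu (integrable_heatKernel ht), integral_heatKernel ht]
    simp

theorem contDiff_heatFlow (hu : Integrable u) (ht : 0 < t) {n : ℕ∞} :
    ContDiff ℝ n (heatFlow N u t) := by
  rw [funext (heatFlow_of_ne_zero ht.ne')]
  exact contDiff_const.mul (contDiff_integral_mul_exp_neg_norm_sq hu ht)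

theorem integrable_exp_log_sub_norm_sq (hu : Integrable u) (hpos : ∀ x, 0 < u x) (ht : 0 ≤ t)
    (x : E N) : Integrable fun y => Real.exp (Real.log (u y) - ‖x - y‖ ^ 2 / (4 * t)) := by
  refine hu.mono (Real.measurable_exp.comp_aemeasurable
    (hu.aemeasurable.log.sub (by fun_prop))).aestronglyMeasurable (.of_forall fun y => ?_)
  rw [Real.norm_eq_abs, Real.abs_exp, Real.norm_of_nonneg (hpos y).le,
    ← Real.le_log_iff_exp_le (hpos y)]
  exact sub_le_self _ (by positivity)

theorem heatFlow_eq_integral_exp (hpos : ∀ x, 0 < u x) (ht : t ≠ 0) (x : E N) :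
    heatFlow N u t x = (4 * Real.pi * t) ^ (-(N : ℝ) / 2) *
      ∫ y, Real.exp (Real.log (u y) - ‖x - y‖ ^ 2 / (4 * t)) := by
  simp only [heatFlow_of_ne_zero ht, sub_eq_add_neg (Real.log _), Real.exp_add,
    Real.exp_log (hpos _), neg_div]

theorem heatFlow_pos (hu : Integrable u) (hpos : ∀ x, 0 < u x) (ht : 0 ≤ t) (x : E N) :
    0 < heatFlow N u t x := by
  rcases ht.eq_or_lt with rfl | ht
  · simpa only [heatFlow_zero] using hpos x
  · rw [heatFlow_eq_integral_exp hpos ht.ne']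
    exact mul_pos (by positivity)
      (integral_exp_pos (integrable_exp_log_sub_norm_sq hu hpos ht.le x))

theorem convexOn_log_heatFlow (hu : Integrable u) (hpos : ∀ x, 0 < u x) {τ : ℝ} (hτ : 0 ≤ τ)
    (ht : 0 < t) (hconv : ConvexOn ℝ Set.univ fun x => 4 * τ * Real.log (u x) + ‖x‖ ^ 2) :
    ConvexOn ℝ Set.univ fun x => 4 * (τ + t) * Real.log (heatFlow N u t x) + ‖x‖ ^ 2 := by
  have hint := integrable_exp_log_sub_norm_sq hu hpos ht.le
  refine ((convexOn_log_integral_exp_sub_norm_sq hτ ht hconv hint).add_const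
    (4 * (τ + t) * Real.log ((4 * Real.pi * t) ^ (-(N : ℝ) / 2)))).congr fun x _ => ?_
  rw [heatFlow_eq_integral_exp hpos ht.ne', Real.log_mul (by positivity)
    (integral_exp_pos (hint x)).ne', Pi.add_apply]
  ring

end HeatFlow

/- For `τ₀ = 0` this is Hamilton's matrix Harnack inequality on `ℝ^N`. -/
theorem statement_7_general (N : ℕ) (τ₀ : ℝ) (hτ₀ : 0 ≤ τ₀) (u₀ : E N → ℝ) (hu₀ : VT N τ₀ u₀)
    (t : ℝ) (ht : 0 ≤ t) :
    VT N (τ₀ + t) (heatFlow N u₀ t) := by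
  rcases ht.eq_or_lt with rfl | ht
  · rwa [heatFlow_zero, add_zero]
  obtain ⟨hC2, hint, hpos, hmass, hHess⟩ := hu₀
  have hUpos := heatFlow_pos hint hpos ht.le
  have hUC2 : ContDiff ℝ 2 (heatFlow N u₀ t) := contDiff_heatFlow hint ht
  refine ⟨hUC2, integrable_heatFlow hint ht.le, hUpos, ?_, ?_⟩
  · rw [integral_heatFlow hint ht.le, hmass]
  · have hconv := (convexOn_const_mul_add_norm_sq_iff (hC2.log fun x => (hpos x).ne') τ₀).2 hHess
    exact (convexOn_const_mul_add_norm_sq_iff (hUC2.log fun x => (hUpos x).ne') (τ₀ + t)).1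
      (convexOn_log_heatFlow hint hpos hτ₀ ht hconv)

/-- the heat flow of `u₀ ∈ 𝒱𝒯₁⁺(τ₀)` satisfies `U(t,·) ∈ 𝒱𝒯₁⁺(τ₀+t)` for all
`t ≥ 0` (positivity, `C²`, unit mass and `2(τ₀+t)·Hess(log U)(x)(v,v) + |v|² ≥ 0` are all
part of the definition of `VT`). -/
theorem statement_7 (N : ℕ) (τ₀ : ℝ) (hτ₀ : 0 < τ₀) (u₀ : E N → ℝ) (hu₀ : VT N τ₀ u₀)
    (t : ℝ) (ht : 0 ≤ t) :
    VT N (τ₀ + t) (heatFlow N u₀ t) :=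
  statement_7_general N τ₀ hτ₀.le u₀ hu₀ t ht
end
end

section
/- Let μ be a Borel measure on ℝ^N and n ≥ 1 an integer. (i) For every p ∈ ℝ^N and every R > 0, μ(B_R(p)) ≤ e^π λ_CM^n[μ] R^n. (ii) Conversely, if there is Θ ≥ 1 such that μ(B_R(p)) ≤ Θ ω_n R^n for all p ∈ ℝ^N and R > 0, where ω_n is the Lebesgue volume of the unit ball in ℝ^n, then λ_CM^n[μ] ≤ Θ. -/
open MeasureTheory Filter Metric
open scoped ENNReal NNReal Topology

noncomputable section

/-! For (i), the Gaussian at scale `ρ = R² / (4π)` centred at `p` is at least `exp (-π)` on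
`B_R(p)`, and its normalisation is exactly `R⁻ⁿ`. For (ii), the superlevel sets of a Gaussian are
balls about its centre, so by the layer-cake formula the ball bound passes to Gaussian integrals,
where it compares `μ` with `Θ` times Lebesgue measure on `ℝⁿ`; the latter has Gaussian density
ratio `Θ` at every scale. -/

section RadialComparison

variable {X Y : Type*}
  [PseudoMetricSpace X] [MeasurableSpace X] {μ : Measure X} {x : X}
  [PseudoMetricSpace Y] [MeasurableSpace Y] {ν : Measure Y} {y : Y}

theorem measure_preimage_nndist_le_of_isLowerSet
    (h : ∀ r : ℝ, 0 < r → μ (ball x r) ≤ ν (ball y r))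
    {S : Set ℝ≥0} (hS : IsLowerSet S) (hSo : IsOpen S) :
    μ ((nndist · x) ⁻¹' S) ≤ ν ((nndist · y) ⁻¹' S) := by
  obtain ⟨D, hDc, hD⟩ := TopologicalSpace.exists_countable_dense ℝ≥0
  have exhaust : (nndist · x) ⁻¹' S ⊆ ⋃ r ∈ S ∩ D, ball x r := by
    intro z hz
    obtain ⟨b, hzb, hb⟩ := exists_Ico_subset_of_mem_nhds (hSo.mem_nhds hz) (exists_gt _)
    obtain ⟨r, hrD, hzr, hrb⟩ := hD.exists_between hzb
    exact Set.mem_biUnion ⟨hb ⟨hzr.le, hrb⟩, hrD⟩ hzr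
  have directed : DirectedOn (Function.onFun (· ⊆ ·) fun r : ℝ≥0 => ball x r) (S ∩ D) :=
    fun r hr s hs => (le_total r s).elim
      (fun hrs => ⟨s, hs, ball_subset_ball (by exact_mod_cast hrs), subset_rfl⟩)
      (fun hsr => ⟨r, hr, subset_rfl, ball_subset_ball (by exact_mod_cast hsr)⟩)
  calc μ ((nndist · x) ⁻¹' S)
      ≤ μ (⋃ r ∈ S ∩ D, ball x r) := measure_mono exhaust
    _ = ⨆ r ∈ S ∩ D, μ (ball x r) :=
        measure_biUnion_eq_iSup (hDc.mono Set.inter_subset_right) directed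
    _ ≤ ν ((nndist · y) ⁻¹' S) := iSup₂_le fun r hr => by
        rcases r.coe_nonneg.eq_or_lt with hr0 | hr0
        · simp [← hr0]
        · have ball_subset : ball y r ⊆ (nndist · y) ⁻¹' S :=
            fun z hz => hS (le_of_lt (a := nndist z y) (by exact_mod_cast hz)) hr.1
          exact (h r hr0).trans (measure_mono ball_subset)

theorem lintegral_comp_nndist_le_of_measure_ball_le
    [OpensMeasurableSpace X] [OpensMeasurableSpace Y]
    (h : ∀ r : ℝ, 0 < r → μ (ball x r) ≤ ν (ball y r))
    {f : ℝ≥0 → ℝ} (hf : Antitone f) (hfc : LowerSemicontinuous f) (hf0 : 0 ≤ f) :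
    ∫⁻ z, ENNReal.ofReal (f (nndist z x)) ∂μ ≤ ∫⁻ z, ENNReal.ofReal (f (nndist z y)) ∂ν := by
  rw [lintegral_eq_lintegral_meas_lt μ (ae_of_all _ fun _ => hf0 _)
      (hf.measurable.comp (by fun_prop)).aemeasurable,
    lintegral_eq_lintegral_meas_lt ν (ae_of_all _ fun _ => hf0 _)
      (hf.measurable.comp (by fun_prop)).aemeasurable]
  exact lintegral_mono fun t =>
    measure_preimage_nndist_le_of_isLowerSet h (fun _ _ hsr hr => hr.trans_le (hf hsr))
      (hfc.isOpen_preimage t)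

end RadialComparison

section Entropy

variable {X : Type*} [PseudoMetricSpace X] [MeasurableSpace X]

/-- The Gaussian density ratio `(4πρ)^{-n/2} ∫ exp(-d(x,x₀)²/(4ρ)) dμ(x)` of `μ` at scale `ρ` and
centre `x₀`, the quantity whose supremum is the `n`-dimensional entropy. -/
def gaussianDensityRatio (n : ℕ) (μ : Measure X) (ρ : ℝ) (x₀ : X) : ℝ≥0∞ :=
  ENNReal.ofReal ((4 * Real.pi * ρ) ^ (-(n : ℝ) / 2)) *
    ∫⁻ x, ENNReal.ofReal (Real.exp (-dist x x₀ ^ 2 / (4 * ρ))) ∂μ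

/-- The Colding–Minicozzi entropy of a measure on an arbitrary pseudometric space, with the
distance in place of the Euclidean norm in `lamCM`. -/
def coldingMinicozziEntropy (n : ℕ) (μ : Measure X) : ℝ≥0∞ :=
  ⨆ (ρ : ℝ) (_ : 0 < ρ) (x₀ : X), gaussianDensityRatio n μ ρ x₀

theorem lamCM_eq_coldingMinicozziEntropy {N : ℕ} (n : ℕ) (μ : Measure (E N)) :
    lamCM n μ = coldingMinicozziEntropy n μ := by
  simp only [lamCM, coldingMinicozziEntropy, gaussianDensityRatio, dist_eq_norm]

theorem gaussianDensityRatio_le_coldingMinicozziEntropy (n : ℕ) (μ : Measure X) {ρ : ℝ}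
    (hρ : 0 < ρ) (x₀ : X) : gaussianDensityRatio n μ ρ x₀ ≤ coldingMinicozziEntropy n μ :=
  le_iSup₂_of_le ρ hρ (le_iSup (gaussianDensityRatio n μ ρ) x₀)

theorem gaussianDensityRatio_smul_measure (n : ℕ) (c : ℝ≥0∞) (μ : Measure X) (ρ : ℝ) (x₀ : X) :
    gaussianDensityRatio n (c • μ) ρ x₀ = c * gaussianDensityRatio n μ ρ x₀ := by
  rw [gaussianDensityRatio, lintegral_smul_measure, smul_eq_mul, mul_left_comm,
    gaussianDensityRatio]

theorem gaussianDensityRatio_le_of_measure_ball_le {Y : Type*} [PseudoMetricSpace Y]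
    [MeasurableSpace Y] [OpensMeasurableSpace X] [OpensMeasurableSpace Y] (n : ℕ)
    {μ : Measure X} {ν : Measure Y} {x : X} {y : Y} {ρ : ℝ} (hρ : 0 ≤ ρ)
    (h : ∀ r : ℝ, 0 < r → μ (ball x r) ≤ ν (ball y r)) :
    gaussianDensityRatio n μ ρ x ≤ gaussianDensityRatio n ν ρ y := by
  have antitone_gaussian : Antitone fun r : ℝ≥0 => Real.exp (-(r : ℝ) ^ 2 / (4 * ρ)) :=
    fun r s hrs => by dsimp only; gcongr
  have continuous_gaussian : Continuous fun r : ℝ≥0 => Real.exp (-(r : ℝ) ^ 2 / (4 * ρ)) := by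
    fun_prop
  exact mul_le_mul_right (lintegral_comp_nndist_le_of_measure_ball_le h antitone_gaussian
    continuous_gaussian.lowerSemicontinuous fun _ => (Real.exp_pos _).le) _

theorem ofReal_exp_mul_measure_ball_le_lintegral [OpensMeasurableSpace X] (μ : Measure X)
    {ρ : ℝ} (hρ : 0 ≤ ρ) (p : X) (R : ℝ) :
    ENNReal.ofReal (Real.exp (-R ^ 2 / (4 * ρ))) * μ (ball p R) ≤
      ∫⁻ x, ENNReal.ofReal (Real.exp (-dist x p ^ 2 / (4 * ρ))) ∂μ := by
  have gaussian_ge_on_ball : ball p R ⊆ {x | ENNReal.ofReal (Real.exp (-R ^ 2 / (4 * ρ))) ≤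
      ENNReal.ofReal (Real.exp (-dist x p ^ 2 / (4 * ρ)))} := by
    intro x hx
    have hxR : dist x p ≤ R := (mem_ball.1 hx).le
    rw [Set.mem_ofPred_eq]
    gcongr
  exact (mul_le_mul_right (measure_mono gaussian_ge_on_ball) _).trans
    (mul_meas_ge_le_lintegral (by fun_prop) _)

theorem measure_ball_le_mul_gaussianDensityRatio [OpensMeasurableSpace X] (n : ℕ) (μ : Measure X)
    {ρ : ℝ} (hρ : 0 < ρ) (p : X) (R : ℝ) :
    μ (ball p R) ≤ ENNReal.ofReal (Real.exp (R ^ 2 / (4 * ρ)) * (4 * Real.pi * ρ) ^ ((n : ℝ) / 2)) *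
      gaussianDensityRatio n μ ρ p := by
  have normalisation : Real.exp (R ^ 2 / (4 * ρ)) * (4 * Real.pi * ρ) ^ ((n : ℝ) / 2) *
      (4 * Real.pi * ρ) ^ (-(n : ℝ) / 2) * Real.exp (-R ^ 2 / (4 * ρ)) = 1 := by
    rw [neg_div, neg_div, Real.exp_neg, Real.rpow_neg (by positivity)]
    field_simp
  calc μ (ball p R)
      = ENNReal.ofReal (Real.exp (R ^ 2 / (4 * ρ)) * (4 * Real.pi * ρ) ^ ((n : ℝ) / 2)) *
          (ENNReal.ofReal ((4 * Real.pi * ρ) ^ (-(n : ℝ) / 2)) *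
            (ENNReal.ofReal (Real.exp (-R ^ 2 / (4 * ρ))) * μ (ball p R))) := by
        rw [← mul_assoc, ← mul_assoc, ← ENNReal.ofReal_mul (by positivity),
          ← ENNReal.ofReal_mul (by positivity), normalisation, ENNReal.ofReal_one, one_mul]
    _ ≤ _ := by
        rw [gaussianDensityRatio]
        gcongr
        exact ofReal_exp_mul_measure_ball_le_lintegral μ hρ.le p R

theorem measure_ball_le_mul_coldingMinicozziEntropy [OpensMeasurableSpace X] (n : ℕ)
    (μ : Measure X) (p : X) {R : ℝ} (hR : 0 < R) :
    μ (ball p R) ≤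
      ENNReal.ofReal (Real.exp Real.pi * R ^ n) * coldingMinicozziEntropy n μ := by
  have hρ : 0 < R ^ 2 / (4 * Real.pi) := by positivity
  have exponent : R ^ 2 / (4 * (R ^ 2 / (4 * Real.pi))) = Real.pi := by field_simp
  have scale : (4 * Real.pi * (R ^ 2 / (4 * Real.pi))) ^ ((n : ℝ) / 2) = R ^ n := by
    rw [mul_div_cancel₀ _ (by positivity), ← Real.rpow_natCast_mul hR.le, Nat.cast_ofNat,
      mul_div_cancel₀ _ two_ne_zero, Real.rpow_natCast]
  calc μ (ball p R)
      ≤ ENNReal.ofReal (Real.exp Real.pi * R ^ n) *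
          gaussianDensityRatio n μ (R ^ 2 / (4 * Real.pi)) p := by
        simpa only [exponent, scale] using measure_ball_le_mul_gaussianDensityRatio n μ hρ p R
    _ ≤ _ := by
        gcongr
        exact gaussianDensityRatio_le_coldingMinicozziEntropy n μ hρ p

end Entropy

section Lebesgue

variable {V : Type*} [NormedAddCommGroup V] [InnerProductSpace ℝ V] [FiniteDimensional ℝ V]
  [MeasurableSpace V] [BorelSpace V]

theorem lintegral_exp_neg_mul_sq_norm {b : ℝ} (hb : 0 < b) :
    ∫⁻ v : V, ENNReal.ofReal (Real.exp (-b * ‖v‖ ^ 2)) =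
      ENNReal.ofReal ((Real.pi / b) ^ (Module.finrank ℝ V / 2 : ℝ)) := by
  have integral_eq := GaussianFourier.integral_rexp_neg_mul_sq_norm (V := V) hb
  have integrable : Integrable fun v : V => Real.exp (-b * ‖v‖ ^ 2) :=
    .of_integral_ne_zero (integral_eq ▸ by positivity)
  rw [← ofReal_integral_eq_lintegral_ofReal integrable (ae_of_all _ fun _ => (Real.exp_pos _).le),
    integral_eq]

theorem gaussianDensityRatio_volume {ρ : ℝ} (hρ : 0 < ρ) :
    gaussianDensityRatio (Module.finrank ℝ V) volume ρ (0 : V) = 1 := by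
  have gaussian_eq (v : V) : -dist v 0 ^ 2 / (4 * ρ) = -(4 * ρ)⁻¹ * ‖v‖ ^ 2 := by
    rw [dist_zero_right]
    ring
  simp only [gaussianDensityRatio, gaussian_eq]
  rw [lintegral_exp_neg_mul_sq_norm (by positivity), ← ENNReal.ofReal_mul (by positivity),
    div_inv_eq_mul, ← mul_assoc, mul_comm Real.pi, ← Real.rpow_add (by positivity), neg_div,
    neg_add_cancel, Real.rpow_zero, ENNReal.ofReal_one]

theorem coldingMinicozziEntropy_le_of_measure_ball_le {X : Type*} [PseudoMetricSpace X]
    [MeasurableSpace X] [OpensMeasurableSpace X] {μ : Measure X} {Θ : ℝ≥0∞}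
    (h : ∀ (p : X) (R : ℝ), 0 < R → μ (ball p R) ≤ Θ * volume (ball (0 : V) R)) :
    coldingMinicozziEntropy (Module.finrank ℝ V) μ ≤ Θ := by
  refine iSup₂_le fun ρ hρ => iSup_le fun p => ?_
  calc gaussianDensityRatio (Module.finrank ℝ V) μ ρ p
      ≤ gaussianDensityRatio (Module.finrank ℝ V) (Θ • volume) ρ (0 : V) :=
        gaussianDensityRatio_le_of_measure_ball_le _ hρ.le (h p)
    _ = Θ := by rw [gaussianDensityRatio_smul_measure, gaussianDensityRatio_volume hρ, mul_one]

theorem ofReal_mul_volume_ball_one_mul_pow (Θ : ℝ) {R : ℝ} (hR : 0 < R) :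
    ENNReal.ofReal (Θ * (volume (ball (0 : V) 1)).toReal * R ^ Module.finrank ℝ V) =
      ENNReal.ofReal Θ * volume (ball (0 : V) R) := by
  rw [Measure.addHaar_ball_of_pos _ _ hR, mul_assoc, ENNReal.ofReal_mul' (by positivity),
    mul_comm (ENNReal.toReal _), ENNReal.ofReal_mul (by positivity),
    ENNReal.ofReal_toReal measure_ball_lt_top.ne]

end Lebesgue

theorem statement_8_general {X : Type*} [PseudoMetricSpace X] [MeasurableSpace X]
    [OpensMeasurableSpace X] (n : ℕ) (μ : Measure X) :
    (∀ (p : X) (R : ℝ), 0 < R →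
        μ (ball p R) ≤
          ENNReal.ofReal (Real.exp Real.pi * R ^ n) * coldingMinicozziEntropy n μ) ∧
      ∀ Θ : ℝ,
        (∀ (p : X) (R : ℝ), 0 < R →
          μ (ball p R) ≤
            ENNReal.ofReal (Θ * (volume (ball (0 : E n) 1)).toReal * R ^ n)) →
        coldingMinicozziEntropy n μ ≤ ENNReal.ofReal Θ := by
  refine ⟨fun p R => measure_ball_le_mul_coldingMinicozziEntropy n μ p, fun Θ h => ?_⟩
  have finrank_eq : Module.finrank ℝ (E n) = n := finrank_euclideanSpace_fin
  have ball_le (p : X) (R : ℝ) (hR : 0 < R) :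
      μ (ball p R) ≤ ENNReal.ofReal Θ * volume (ball (0 : E n) R) := by
    simpa only [← ofReal_mul_volume_ball_one_mul_pow Θ hR, finrank_eq] using h p R hR
  simpa only [finrank_eq] using coldingMinicozziEntropy_le_of_measure_ball_le ball_le

/-- (i) `μ(B_R(p)) ≤ e^π λ_CM^n[μ] R^n`; (ii) if `μ(B_R(p)) ≤ Θ ω_n R^n`
for all `p`, `R > 0` (with `ω_n` the volume of the unit ball in `ℝ^n`), then
`λ_CM^n[μ] ≤ Θ`. -/
theorem statement_8 (N n : ℕ) (hn : 1 ≤ n) (μ : Measure (E N)) :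
    (∀ (p : E N) (R : ℝ), 0 < R →
        μ (Metric.ball p R) ≤ ENNReal.ofReal (Real.exp Real.pi * R ^ n) * lamCM n μ) ∧
      ∀ Θ : ℝ, 1 ≤ Θ →
        (∀ (p : E N) (R : ℝ), 0 < R →
          μ (Metric.ball p R) ≤
            ENNReal.ofReal (Θ * (volume (Metric.ball (0 : E n) 1)).toReal * R ^ n)) →
        lamCM n μ ≤ ENNReal.ofReal Θ := by
  rw [lamCM_eq_coldingMinicozziEntropy]
  exact ⟨(statement_8_general n μ).1, fun Θ _ => (statement_8_general n μ).2 Θ⟩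
end
end
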